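/- Let u be C^∞ and 𝒰 ⊆ ℝ² a bounded open set. There exists a constant C > 0 (depending on u and 𝒰) such that for every K > 0 there exists a constant C_K > 0 with the following property: for all v ∈ C₀^∞(𝒰), Σ_{|I| ≤ 2} ‖X^I v‖_{H²} + K · Σ_{|I| ≤ 1} ‖X^I v‖_{H²} ≤ C ‖P_u v‖_{H²} + C_K ‖v‖_{L²}, where the sums range over all words I of length at most 2 (respectively at most 1) in the letters {1,2,3} and X^I denotes the corresponding composition X^{I₁}X^{I₂}⋯X^{I_{|I|}} of the vector fields (the empty word giving the identity). -/

import Mathlib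

open MeasureTheory

/-- Partial derivative in the first (x) coordinate. -/
noncomputable def pdx (f : ℝ × ℝ → ℝ) : ℝ × ℝ → ℝ :=
  fun p => deriv (fun x => f (x, p.2)) p.1

/-- Partial derivative in the second (t) coordinate. -/
noncomputable def pdt (f : ℝ × ℝ → ℝ) : ℝ × ℝ → ℝ :=
  fun p => deriv (fun t => f (p.1, t)) p.2

/-- The mixed partial derivative ∂ₓ^{α₁} ∂ₜ^{α₂}. -/
noncomputable def pderiv2 (α : ℕ × ℕ) (f : ℝ × ℝ → ℝ) : ℝ × ℝ → ℝ :=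
  pdx^[α.1] (pdt^[α.2] f)

/-- The set of multi-indices of order at most `s`. -/
def multiIdx (s : ℕ) : Finset (ℕ × ℕ) :=
  (Finset.range (s + 1) ×ˢ Finset.range (s + 1)).filter fun α => α.1 + α.2 ≤ s

/-- Squared L² norm on ℝ². -/
noncomputable def L2normSq (f : ℝ × ℝ → ℝ) : ℝ := ∫ p : ℝ × ℝ, (f p) ^ 2

/-- The Sobolev H^s norm: (Σ_{|α|≤s} ‖∂^α v‖²_{L²})^{1/2}. -/
noncomputable def sobolevNorm (s : ℕ) (f : ℝ × ℝ → ℝ) : ℝ :=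
  Real.sqrt (∑ α ∈ multiIdx s, L2normSq (pderiv2 α f))

/-- The Sobolev H^s inner product: Σ_{|α|≤s} (∂^α v, ∂^α w)_{L²}. -/
noncomputable def sobolevInner (s : ℕ) (f g : ℝ × ℝ → ℝ) : ℝ :=
  ∑ α ∈ multiIdx s, ∫ p : ℝ × ℝ, pderiv2 α f p * pderiv2 α g p

/-- The vector fields X₁ = ∂ₓ, X₂ = xʳ∂ₜ, X₃ = xʳ h̃(x,t,u(x,t)) ∂ₜ. -/
noncomputable def Xvf (r : ℕ) (h : ℝ × ℝ × ℝ → ℝ) (u : ℝ × ℝ → ℝ) :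
    Fin 3 → (ℝ × ℝ → ℝ) → (ℝ × ℝ → ℝ)
  | 0 => fun v => pdx v
  | 1 => fun v => fun p => p.1 ^ r * pdt v p
  | 2 => fun v => fun p => p.1 ^ r * h (p.1, p.2, u p) * pdt v p

/-- The operator P_u v = X₁²v + X₂²v + X₃²v. -/
noncomputable def Pop (r : ℕ) (h : ℝ × ℝ × ℝ → ℝ) (u : ℝ × ℝ → ℝ)
    (v : ℝ × ℝ → ℝ) : ℝ × ℝ → ℝ :=
  fun p => Xvf r h u 0 (Xvf r h u 0 v) p + Xvf r h u 1 (Xvf r h u 1 v) p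
    + Xvf r h u 2 (Xvf r h u 2 v) p

/-!
Write `r = m + 1`, `Y = xʳ∂ₜ` and `g = h̃(x, t, u)`. Up to the first-order term `g (Yg) Y`, the
operator `P_u` is the Grushin operator `∂ₓ² + a Y²` with `a = 1 + g² ≥ 1`. For constant `a`, a
Fourier transform in `t` turns it into the oscillators `d²/dx² - a τ² x²ʳ`, for which the dilation
field `x d/dx` gives the scale-invariant bound of `τ x^m`, that is, of the commutator
`[∂ₓ, Y] = r x^m ∂ₜ`; integration by parts then bounds `∂ₓ²`, `Y∂ₓ` and `Y²` as well. Freezing `a`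
on small balls and commuting with `∂ₓ` and `∂ₜ` gives the same for variable `a` in every `H^s`,
modulo the first-order terms `v`, `∂ₓv`, `Yv`.

The first-order terms have relative bound zero: in `L²` because `‖Xv‖² ≤ ‖v‖ ‖X²v‖`, and in `H^s`
because a derivative `∂ₜv` is in turn controlled by `ρ ∂ₓ∂ₜv` and `C(ρ) Yv` for every `ρ > 0`, again
by dilation in `x`. They are therefore absorbed, with whatever factor `K`, at the cost of `‖v‖_{L²}`
only.
-/

open scoped ContDiff RealInnerProductSpace
open Asymptotics Filter

/-! ### Partial derivatives of smooth functions -/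

/-- Infinitely differentiable real functions on the plane. -/
abbrev Smooth (f : ℝ × ℝ → ℝ) : Prop := ContDiff ℝ ∞ f

section Calculus

variable {f g : ℝ × ℝ → ℝ}

theorem Smooth.differentiableAt (hf : Smooth f) (p : ℝ × ℝ) : DifferentiableAt ℝ f p :=
  hf.contDiffAt.differentiableAt (by simp)

theorem pdx_eq_fderiv (hf : Smooth f) : pdx f = fun p => fderiv ℝ f p (1, 0) := by
  funext p
  exact ((hf.differentiableAt p).hasFDerivAt.comp_hasDerivAt p.1
    ((hasDerivAt_id p.1).prodMk (hasDerivAt_const p.1 p.2))).deriv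

theorem pdt_eq_fderiv (hf : Smooth f) : pdt f = fun p => fderiv ℝ f p (0, 1) := by
  funext p
  exact ((hf.differentiableAt p).hasFDerivAt.comp_hasDerivAt p.2
    ((hasDerivAt_const p.2 p.1).prodMk (hasDerivAt_id p.2))).deriv

theorem Smooth.hasDerivAt_fst (hf : Smooth f) (x t : ℝ) :
    HasDerivAt (fun y => f (y, t)) (pdx f (x, t)) x :=
  ((hf.differentiableAt (x, t)).comp x (by fun_prop)).hasDerivAt

theorem Smooth.hasDerivAt_snd (hf : Smooth f) (x t : ℝ) :
    HasDerivAt (fun y => f (x, y)) (pdt f (x, t)) t :=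
  ((hf.differentiableAt (x, t)).comp t (by fun_prop)).hasDerivAt

theorem Smooth.fderiv_apply (hf : Smooth f) (e : ℝ × ℝ) : Smooth fun p => fderiv ℝ f p e :=
  (hf.fderiv_right (by simp)).clm_apply contDiff_const

theorem Smooth.pdx (hf : Smooth f) : Smooth (pdx f) :=
  pdx_eq_fderiv hf ▸ hf.fderiv_apply _

theorem Smooth.pdt (hf : Smooth f) : Smooth (pdt f) :=
  pdt_eq_fderiv hf ▸ hf.fderiv_apply _

theorem Smooth.add (hf : Smooth f) (hg : Smooth g) : Smooth (f + g) :=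
  ContDiff.add hf hg

theorem Smooth.mul (hf : Smooth f) (hg : Smooth g) : Smooth (f * g) :=
  ContDiff.mul hf hg

theorem pdx_add (hf : Smooth f) (hg : Smooth g) : pdx (f + g) = pdx f + pdx g :=
  funext fun p => ((hf.hasDerivAt_fst p.1 p.2).add (hg.hasDerivAt_fst p.1 p.2)).deriv

theorem pdt_add (hf : Smooth f) (hg : Smooth g) : pdt (f + g) = pdt f + pdt g :=
  funext fun p => ((hf.hasDerivAt_snd p.1 p.2).add (hg.hasDerivAt_snd p.1 p.2)).deriv

theorem pdx_mul (hf : Smooth f) (hg : Smooth g) : pdx (f * g) = pdx f * g + f * pdx g :=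
  funext fun p => ((hf.hasDerivAt_fst p.1 p.2).mul (hg.hasDerivAt_fst p.1 p.2)).deriv

theorem pdt_mul (hf : Smooth f) (hg : Smooth g) : pdt (f * g) = pdt f * g + f * pdt g :=
  funext fun p => ((hf.hasDerivAt_snd p.1 p.2).mul (hg.hasDerivAt_snd p.1 p.2)).deriv

theorem Smooth.fst_pow (n : ℕ) : Smooth (Prod.fst ^ n) :=
  contDiff_fst.pow n

theorem pdx_fst_pow (n : ℕ) : pdx (Prod.fst ^ (n + 1)) = (n + 1 : ℝ × ℝ → ℝ) * Prod.fst ^ n := by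
  funext p
  simp [_root_.pdx]

theorem pdt_fst_pow (n : ℕ) : pdt (Prod.fst ^ n) = 0 := by
  funext p
  simp [_root_.pdt]

theorem pdt_pdx (hf : Smooth f) : pdt (pdx f) = pdx (pdt f) := by
  have fderiv_fderiv_apply (p e w : ℝ × ℝ) :
      fderiv ℝ (fun q => fderiv ℝ f q e) p w = fderiv ℝ (fderiv ℝ f) p w e := by
    have hd : DifferentiableAt ℝ (fderiv ℝ f) p :=
      (hf.fderiv_right (m := ∞) (by simp)).contDiffAt.differentiableAt (by simp)
    simp [fderiv_clm_apply hd (differentiableAt_const e)]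
  have hsymm (p : ℝ × ℝ) : IsSymmSndFDerivAt ℝ f p :=
    hf.contDiffAt.isSymmSndFDerivAt (by simpa using WithTop.coe_le_coe.2 (le_top (a := (2 : ℕ∞))))
  rw [pdt_eq_fderiv hf.pdx, pdx_eq_fderiv hf.pdt, pdt_eq_fderiv hf, pdx_eq_fderiv hf]
  funext p
  rw [fderiv_fderiv_apply, fderiv_fderiv_apply, hsymm p]

end Calculus

/-! ### Test functions -/

/-- `IsTestOn U f` says that `f` belongs to `C₀^∞(U)`. -/
structure IsTestOn (U : Set (ℝ × ℝ)) (f : ℝ × ℝ → ℝ) : Prop where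
  smooth : Smooth f
  hasCompactSupport : HasCompactSupport f
  tsupport_subset : tsupport f ⊆ U

namespace IsTestOn

variable {U : Set (ℝ × ℝ)} {f g c : ℝ × ℝ → ℝ}

theorem of_tsupport_subset (hf : IsTestOn U f) (hg : Smooth g) (h : tsupport g ⊆ tsupport f) :
    IsTestOn U g :=
  ⟨hg, hf.hasCompactSupport.mono' ((subset_tsupport g).trans h), h.trans hf.tsupport_subset⟩

theorem mono {V : Set (ℝ × ℝ)} (hf : IsTestOn U f) (h : U ⊆ V) : IsTestOn V f :=
  ⟨hf.smooth, hf.hasCompactSupport, hf.tsupport_subset.trans h⟩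

theorem pdx (hf : IsTestOn U f) : IsTestOn U (pdx f) :=
  hf.of_tsupport_subset hf.smooth.pdx <| by
    rw [pdx_eq_fderiv hf.smooth]; exact tsupport_fderiv_apply_subset ℝ _

theorem pdt (hf : IsTestOn U f) : IsTestOn U (pdt f) :=
  hf.of_tsupport_subset hf.smooth.pdt <| by
    rw [pdt_eq_fderiv hf.smooth]; exact tsupport_fderiv_apply_subset ℝ _

theorem mul_left (hc : Smooth c) (hf : IsTestOn U f) : IsTestOn U (c * f) :=
  hf.of_tsupport_subset (hc.mul hf.smooth) (tsupport_mul_subset_right (f := c))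

theorem add (hf : IsTestOn U f) (hg : IsTestOn U g) : IsTestOn U (f + g) :=
  ⟨hf.smooth.add hg.smooth, hf.hasCompactSupport.add hg.hasCompactSupport,
    (tsupport_add f g).trans (Set.union_subset hf.tsupport_subset hg.tsupport_subset)⟩

theorem integrable (hf : IsTestOn U f) : Integrable f :=
  hf.smooth.continuous.integrable_of_hasCompactSupport hf.hasCompactSupport

theorem memLp_two (hf : IsTestOn U f) : MemLp f 2 :=
  hf.smooth.continuous.memLp_of_hasCompactSupport hf.hasCompactSupport

theorem integral_fderiv_apply (hf : IsTestOn U f) {e : ℝ × ℝ}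
    (hfe : Integrable fun p => fderiv ℝ f p e) : ∫ p, fderiv ℝ f p e = 0 := by
  simpa using integral_smul_fderiv_eq_neg_fderiv_smul_of_integrable (𝕜 := ℝ)
    (μ := (volume : Measure (ℝ × ℝ))) (f := fun _ => (1 : ℝ)) (g := f) (v := e)
    (by simp) (by simpa using hfe) (by simpa using hf.integrable)
    (fun _ _ => differentiableAt_const _) (fun p _ => hf.smooth.differentiableAt p)

theorem integral_pdx (hf : IsTestOn U f) : ∫ p, _root_.pdx f p = 0 := by
  have h := hf.pdx.integrable
  rw [pdx_eq_fderiv hf.smooth] at h ⊢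
  exact hf.integral_fderiv_apply h

theorem integral_pdt (hf : IsTestOn U f) : ∫ p, _root_.pdt f p = 0 := by
  have h := hf.pdt.integrable
  rw [pdt_eq_fderiv hf.smooth] at h ⊢
  exact hf.integral_fderiv_apply h

theorem integral_mul_pdx (hc : Smooth c) (hf : IsTestOn U f) :
    ∫ p, c p * _root_.pdx f p = -∫ p, _root_.pdx c p * f p := by
  have h := (hf.mul_left hc).integral_pdx
  rw [pdx_mul hc hf.smooth,
    integral_add' (hf.mul_left hc.pdx).integrable (hf.pdx.mul_left hc).integrable] at h
  exact eq_neg_of_add_eq_zero_right h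

theorem integral_mul_pdt (hc : Smooth c) (hf : IsTestOn U f) :
    ∫ p, c p * _root_.pdt f p = -∫ p, _root_.pdt c p * f p := by
  have h := (hf.mul_left hc).integral_pdt
  rw [pdt_mul hc hf.smooth,
    integral_add' (hf.mul_left hc.pdt).integrable (hf.pdt.mul_left hc).integrable] at h
  exact eq_neg_of_add_eq_zero_right h

end IsTestOn

/-! ### Sobolev norms of test functions -/

section Sobolev

variable {U : Set (ℝ × ℝ)} {f g c : ℝ × ℝ → ℝ} {s : ℕ}

theorem mem_multiIdx {α : ℕ × ℕ} : α ∈ multiIdx s ↔ α.1 + α.2 ≤ s := by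
  simp only [multiIdx, Finset.mem_filter, Finset.mem_product, Finset.mem_range]
  lia

theorem pderiv2_pdt (α : ℕ × ℕ) : pderiv2 α (pdt f) = pderiv2 (α + (0, 1)) f := rfl

theorem Smooth.iterate_pdt (hf : Smooth f) (n : ℕ) : Smooth (_root_.pdt^[n] f) := by
  induction n with
  | zero => exact hf
  | succ n ih => rw [Function.iterate_succ_apply']; exact ih.pdt

theorem iterate_pdt_pdx (hf : Smooth f) (n : ℕ) : pdt^[n] (pdx f) = pdx (pdt^[n] f) := by
  induction n with
  | zero => rfl
  | succ n ih => simp only [Function.iterate_succ_apply', ih, pdt_pdx (hf.iterate_pdt n)]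

theorem pderiv2_pdx (hf : Smooth f) (α : ℕ × ℕ) :
    pderiv2 α (pdx f) = pderiv2 (α + (1, 0)) f := by
  rw [pderiv2, iterate_pdt_pdx hf]; rfl

theorem L2normSq_nonneg : 0 ≤ L2normSq f :=
  integral_nonneg fun _ => sq_nonneg _

theorem sobolevNorm_nonneg : 0 ≤ sobolevNorm s f :=
  Real.sqrt_nonneg _

theorem sobolevNorm_sq : sobolevNorm s f ^ 2 = ∑ α ∈ multiIdx s, L2normSq (pderiv2 α f) :=
  Real.sq_sqrt (Finset.sum_nonneg fun _ _ => L2normSq_nonneg)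

theorem sobolevNorm_zero_sq : sobolevNorm 0 f ^ 2 = ∫ p, f p ^ 2 :=
  sobolevNorm_sq.trans (Finset.sum_singleton _ (0, 0))

theorem sobolevNorm_mono {s' : ℕ} (h : s ≤ s') : sobolevNorm s f ≤ sobolevNorm s' f :=
  Real.sqrt_le_sqrt <| Finset.sum_le_sum_of_subset_of_nonneg
    (fun _ hα => mem_multiIdx.2 ((mem_multiIdx.1 hα).trans h)) fun _ _ _ => L2normSq_nonneg

theorem sum_multiIdx_add_le {e : ℕ × ℕ} (he : e.1 + e.2 = 1) :
    ∑ α ∈ multiIdx s, L2normSq (pderiv2 (α + e) f) ≤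
      ∑ α ∈ multiIdx (s + 1), L2normSq (pderiv2 α f) := by
  rw [← Finset.sum_image (f := fun α => L2normSq (pderiv2 α f)) (add_left_injective e).injOn]
  refine Finset.sum_le_sum_of_subset_of_nonneg (fun β hβ => ?_) fun _ _ _ => L2normSq_nonneg
  obtain ⟨α, hα, rfl⟩ := Finset.mem_image.1 hβ
  have := mem_multiIdx.1 hα
  exact mem_multiIdx.2 (by simp only [Prod.fst_add, Prod.snd_add]; lia)

theorem sobolevNorm_pdx_le (hf : Smooth f) : sobolevNorm s (pdx f) ≤ sobolevNorm (s + 1) f := by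
  refine Real.sqrt_le_sqrt ?_
  simpa only [pderiv2_pdx hf] using sum_multiIdx_add_le rfl

theorem sobolevNorm_pdt_le : sobolevNorm s (pdt f) ≤ sobolevNorm (s + 1) f := by
  refine Real.sqrt_le_sqrt ?_
  simpa only [pderiv2_pdt] using sum_multiIdx_add_le rfl

theorem multiIdx_succ_subset : multiIdx (s + 1) ⊆
    multiIdx s ∪ ((multiIdx s).image (· + (1, 0)) ∪ (multiIdx s).image (· + (0, 1))) := by
  rintro ⟨a, b⟩ h
  simp only [Finset.mem_union, Finset.mem_image, mem_multiIdx, Prod.exists, Prod.mk_add_mk,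
    Prod.mk.injEq] at h ⊢
  rcases a with - | a
  · rcases b with - | b
    · exact .inl (by lia)
    · exact .inr (.inr ⟨0, b, by lia, rfl, rfl⟩)
  · exact .inr (.inl ⟨a, b, by lia, rfl, rfl⟩)

theorem sobolevNorm_succ_sq_le (hf : Smooth f) : sobolevNorm (s + 1) f ^ 2 ≤
    sobolevNorm s f ^ 2 + (sobolevNorm s (pdx f) ^ 2 + sobolevNorm s (pdt f) ^ 2) := by
  have sum_union_le (A B : Finset (ℕ × ℕ)) : ∑ α ∈ A ∪ B, L2normSq (pderiv2 α f) ≤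
      ∑ α ∈ A, L2normSq (pderiv2 α f) + ∑ α ∈ B, L2normSq (pderiv2 α f) := by
    rw [← Finset.sum_union_inter]
    exact le_add_of_nonneg_right (Finset.sum_nonneg fun _ _ => L2normSq_nonneg)
  have sum_image (e : ℕ × ℕ) : ∑ α ∈ (multiIdx s).image (· + e), L2normSq (pderiv2 α f) =
      ∑ α ∈ multiIdx s, L2normSq (pderiv2 (α + e) f) :=
    Finset.sum_image (add_left_injective e).injOn
  simp only [sobolevNorm_sq, pderiv2_pdx hf, pderiv2_pdt, ← sum_image]
  exact (Finset.sum_le_sum_of_subset_of_nonneg multiIdx_succ_subset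
    fun _ _ _ => L2normSq_nonneg).trans
      ((sum_union_le _ _).trans (add_le_add_right (sum_union_le _ _) _))

theorem sobolevNorm_succ_le (hf : Smooth f) :
    sobolevNorm (s + 1) f ≤ sobolevNorm s f + sobolevNorm s (pdx f) + sobolevNorm s (pdt f) := by
  have h0 := sobolevNorm_nonneg (s := s) (f := f)
  have hx := sobolevNorm_nonneg (s := s) (f := pdx f)
  have ht := sobolevNorm_nonneg (s := s) (f := pdt f)
  exact le_of_sq_le_sq (by nlinarith [sobolevNorm_succ_sq_le (s := s) hf]) (by positivity)

theorem IsTestOn.sobolevNorm_zero_eq_lpNorm (hf : IsTestOn U f) :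
    sobolevNorm 0 f = lpNorm f 2 volume := by
  rw [lpNorm_eq_integral_norm_rpow_toReal two_ne_zero ENNReal.ofNat_ne_top
    hf.memLp_two.aestronglyMeasurable, ← Real.sqrt_sq sobolevNorm_nonneg, sobolevNorm_zero_sq]
  simp [Real.sqrt_eq_rpow]

theorem IsTestOn.abs_integral_mul_le {V : Set (ℝ × ℝ)} (hf : IsTestOn U f) (hg : IsTestOn V g) :
    |∫ p, f p * g p| ≤ sobolevNorm 0 f * sobolevNorm 0 g := by
  rw [hf.sobolevNorm_zero_eq_lpNorm, hg.sobolevNorm_zero_eq_lpNorm,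
    ← toReal_eLpNorm hf.memLp_two.1, ← toReal_eLpNorm hg.memLp_two.1,
    ← Lp.norm_toLp f hf.memLp_two, ← Lp.norm_toLp g hg.memLp_two]
  refine (congrArg abs ?_).trans_le
    (abs_real_inner_le_norm (hf.memLp_two.toLp f) (hg.memLp_two.toLp g))
  rw [L2.inner_def]
  refine integral_congr_ae ?_
  filter_upwards [hf.memLp_two.coeFn_toLp, hg.memLp_two.coeFn_toLp] with p hfp hgp
  simp [hfp, hgp, mul_comm]

theorem IsTestOn.sobolevNorm_add_le {V : Set (ℝ × ℝ)} (hf : IsTestOn U f) (hg : IsTestOn V g) :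
    sobolevNorm s (f + g) ≤ 3 ^ s * (sobolevNorm s f + sobolevNorm s g) := by
  induction s generalizing f g with
  | zero =>
    have hfg := (hf.mono U.subset_univ).add (hg.mono V.subset_univ)
    rw [hfg.sobolevNorm_zero_eq_lpNorm, hf.sobolevNorm_zero_eq_lpNorm,
      hg.sobolevNorm_zero_eq_lpNorm, pow_zero, one_mul]
    exact lpNorm_add_le hf.memLp_two one_le_two
  | succ s ih =>
    have bound (F G : ℝ × ℝ → ℝ) (hF : sobolevNorm s F ≤ sobolevNorm (s + 1) f)
        (hG : sobolevNorm s G ≤ sobolevNorm (s + 1) g)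
        (h : sobolevNorm s (F + G) ≤ 3 ^ s * (sobolevNorm s F + sobolevNorm s G)) :
        sobolevNorm s (F + G) ≤ 3 ^ s * (sobolevNorm (s + 1) f + sobolevNorm (s + 1) g) :=
      h.trans (by gcongr)
    have h0 := bound f g (sobolevNorm_mono s.le_succ) (sobolevNorm_mono s.le_succ) (ih hf hg)
    have hx := bound _ _ (sobolevNorm_pdx_le hf.smooth) (sobolevNorm_pdx_le hg.smooth)
      (ih hf.pdx hg.pdx)
    have ht := bound _ _ sobolevNorm_pdt_le sobolevNorm_pdt_le (ih hf.pdt hg.pdt)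
    have h := sobolevNorm_succ_le (s := s) (hf.smooth.add hg.smooth)
    rw [pdx_add hf.smooth hg.smooth, pdt_add hf.smooth hg.smooth] at h
    rw [pow_succ]
    linarith

theorem IsTestOn.sobolevNorm_zero_mul_le {C : ℝ} (hC : 0 ≤ C) (hc : Smooth c)
    (hf : IsTestOn U f) (h : ∀ p ∈ U, |c p| ≤ C) :
    sobolevNorm 0 (c * f) ≤ C * sobolevNorm 0 f := by
  refine le_of_sq_le_sq ?_ (mul_nonneg hC sobolevNorm_nonneg)
  rw [mul_pow, sobolevNorm_zero_sq, sobolevNorm_zero_sq, ← integral_const_mul]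
  refine integral_mono (hf.mul_left hc).memLp_two.integrable_sq
    (hf.memLp_two.integrable_sq.const_mul _) fun p => ?_
  by_cases hp : p ∈ U
  · have := h p hp
    rw [Pi.mul_apply, mul_pow, ← sq_abs (c p)]
    gcongr
  · have : f p = 0 := image_eq_zero_of_notMem_tsupport fun hp' => hp (hf.tsupport_subset hp')
    simp [this]

theorem exists_sobolevNorm_mul_le (hU : Bornology.IsBounded U) (hc : Smooth c) (s : ℕ) :
    ∃ C ≥ 0, ∀ f, IsTestOn U f → sobolevNorm s (c * f) ≤ C * sobolevNorm s f := by
  induction s generalizing c with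
  | zero =>
    obtain ⟨C, hC⟩ := hU.isCompact_closure.exists_bound_of_continuousOn hc.continuous.continuousOn
    exact ⟨|C|, abs_nonneg C, fun f hf => hf.sobolevNorm_zero_mul_le (abs_nonneg C) hc
      fun p hp => (hC p (subset_closure hp)).trans (le_abs_self C)⟩
  | succ s ih =>
    obtain ⟨C, hC, h⟩ := ih hc
    obtain ⟨Cx, hCx, hx⟩ := ih hc.pdx
    obtain ⟨Ct, hCt, ht⟩ := ih hc.pdt
    refine ⟨C + 3 ^ s * (Cx + C) + 3 ^ s * (Ct + C), by positivity, fun f hf => ?_⟩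
    have hmono := sobolevNorm_mono (f := f) s.le_succ
    have h0 := (h f hf).trans (mul_le_mul_of_nonneg_left hmono hC)
    have hxf := (hx f hf).trans (mul_le_mul_of_nonneg_left hmono hCx)
    have htf := (ht f hf).trans (mul_le_mul_of_nonneg_left hmono hCt)
    have hfx := (h _ hf.pdx).trans
      (mul_le_mul_of_nonneg_left (sobolevNorm_pdx_le hf.smooth) hC)
    have hft := (h _ hf.pdt).trans (mul_le_mul_of_nonneg_left sobolevNorm_pdt_le hC)
    have hsucc := sobolevNorm_succ_le (s := s) (hc.mul hf.smooth)
    rw [pdx_mul hc hf.smooth, pdt_mul hc hf.smooth] at hsucc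
    have hdx := ((hf.mul_left hc.pdx).sobolevNorm_add_le (hf.pdx.mul_left hc)).trans
      (mul_le_mul_of_nonneg_left (add_le_add hxf hfx) (by positivity))
    have hdt := ((hf.mul_left hc.pdt).sobolevNorm_add_le (hf.pdt.mul_left hc)).trans
      (mul_le_mul_of_nonneg_left (add_le_add htf hft) (by positivity))
    linarith

end Sobolev

/-! ### Estimates uniform over test functions -/

/-- The filter along which `f =O[testFilter U] g` means `‖f v‖ ≤ C ‖g v‖` for all
`v ∈ C₀^∞(U)`, with `C` independent of `v`. -/
abbrev testFilter (U : Set (ℝ × ℝ)) : Filter (ℝ × ℝ → ℝ) := 𝓟 {v | IsTestOn U v}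

/-- `Controlled U s F Q` says that the operator `F` preserves `C₀^∞(U)` and that
`‖F v‖_{H^s} ≤ C |Q v|` there. -/
structure Controlled (U : Set (ℝ × ℝ)) (s : ℕ) (F : (ℝ × ℝ → ℝ) → ℝ × ℝ → ℝ)
    (Q : (ℝ × ℝ → ℝ) → ℝ) : Prop where
  isTestOn {v : ℝ × ℝ → ℝ} : IsTestOn U v → IsTestOn U (F v)
  isBigO : (fun v => sobolevNorm s (F v)) =O[testFilter U] Q

namespace Controlled

variable {U : Set (ℝ × ℝ)} {s : ℕ} {F G : (ℝ × ℝ → ℝ) → ℝ × ℝ → ℝ} {Q R : (ℝ × ℝ → ℝ) → ℝ}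

theorem of_le (hF : ∀ {v}, IsTestOn U v → IsTestOn U (F v))
    (h : ∀ v, IsTestOn U v → sobolevNorm s (F v) ≤ Q v) : Controlled U s F Q :=
  ⟨hF, isBigO_principal.2 ⟨1, fun v hv => by
    rw [Real.norm_of_nonneg sobolevNorm_nonneg, one_mul]
    exact (h v hv).trans (le_abs_self _)⟩⟩

theorem congr (hF : Controlled U s F Q) (h : ∀ v, IsTestOn U v → G v = F v) :
    Controlled U s G Q :=
  ⟨fun hv => (h _ hv).symm ▸ hF.isTestOn hv,
    hF.isBigO.congr' (eventually_principal.2 fun v hv => congrArg _ (h v hv).symm) .rfl⟩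

theorem trans (hF : Controlled U s F Q) (h : Q =O[testFilter U] R) : Controlled U s F R :=
  ⟨hF.isTestOn, hF.isBigO.trans h⟩

theorem add (hF : Controlled U s F Q) (hG : Controlled U s G Q) :
    Controlled U s (fun v => F v + G v) Q := by
  refine ⟨fun hv => (hF.isTestOn hv).add (hG.isTestOn hv),
    IsBigO.trans (isBigO_principal.2 ⟨3 ^ s, fun v hv => ?_⟩) (hF.isBigO.add hG.isBigO)⟩
  rw [Real.norm_of_nonneg sobolevNorm_nonneg,
    Real.norm_of_nonneg (add_nonneg sobolevNorm_nonneg sobolevNorm_nonneg)]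
  exact (hF.isTestOn hv).sobolevNorm_add_le (hG.isTestOn hv)

theorem mul (hU : Bornology.IsBounded U) {c : ℝ × ℝ → ℝ} (hc : Smooth c)
    (hF : Controlled U s F Q) : Controlled U s (fun v => c * F v) Q := by
  obtain ⟨C, -, hC⟩ := exists_sobolevNorm_mul_le hU hc s
  refine ⟨fun hv => (hF.isTestOn hv).mul_left hc,
    IsBigO.trans (isBigO_principal.2 ⟨C, fun v hv => ?_⟩) hF.isBigO⟩
  rw [Real.norm_of_nonneg sobolevNorm_nonneg, Real.norm_of_nonneg sobolevNorm_nonneg]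
  exact hC _ (hF.isTestOn hv)

theorem of_sobolevNorm_le {r : ℕ} (hF : Controlled U r F Q)
    (hG : ∀ {v}, IsTestOn U v → IsTestOn U (G v))
    (h : ∀ v, IsTestOn U v → sobolevNorm s (G v) ≤ sobolevNorm r (F v)) : Controlled U s G Q :=
  (of_le hG h).trans hF.isBigO

theorem of_succ (hF : Controlled U (s + 1) F Q) : Controlled U s F Q :=
  hF.of_sobolevNorm_le hF.isTestOn fun _ _ => sobolevNorm_mono s.le_succ

theorem pdx (hF : Controlled U (s + 1) F Q) : Controlled U s (fun v => pdx (F v)) Q :=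
  hF.of_sobolevNorm_le (fun hv => (hF.isTestOn hv).pdx)
    fun _ hv => sobolevNorm_pdx_le (hF.isTestOn hv).smooth

theorem pdt (hF : Controlled U (s + 1) F Q) : Controlled U s (fun v => pdt (F v)) Q :=
  hF.of_sobolevNorm_le (fun hv => (hF.isTestOn hv).pdt) fun _ _ => sobolevNorm_pdt_le

theorem succ (hF : Controlled U s F Q) (hx : Controlled U s (fun v => _root_.pdx (F v)) Q)
    (ht : Controlled U s (fun v => _root_.pdt (F v)) Q) : Controlled U (s + 1) F Q :=
  (of_le hF.isTestOn fun _ hv => sobolevNorm_succ_le (hF.isTestOn hv).smooth).trans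
    ((hF.isBigO.add hx.isBigO).add ht.isBigO)

theorem comp (hF : Controlled U s F Q) (hG : ∀ {v}, IsTestOn U v → IsTestOn U (G v)) :
    Controlled U s (fun v => F (G v)) (fun v => Q (G v)) :=
  ⟨fun hv => hF.isTestOn (hG hv),
    hF.isBigO.comp_tendsto (tendsto_principal_principal.2 fun _ hv => hG hv)⟩

end Controlled

/-! ### The degenerate vector fields -/

/-- The vector field `xⁿ ∂ₜ`. -/
noncomputable def xPowDt (n : ℕ) (v : ℝ × ℝ → ℝ) : ℝ × ℝ → ℝ :=
  Prod.fst ^ n * pdt v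

section Fields

variable {U : Set (ℝ × ℝ)} {v : ℝ × ℝ → ℝ}

theorem Smooth.xPowDt (hv : Smooth v) (n : ℕ) : Smooth (xPowDt n v) :=
  (Smooth.fst_pow n).mul hv.pdt

theorem IsTestOn.xPowDt (hv : IsTestOn U v) (n : ℕ) : IsTestOn U (xPowDt n v) :=
  hv.pdt.mul_left (Smooth.fst_pow n)

theorem Controlled.xPowDt (hU : Bornology.IsBounded U) {s : ℕ}
    {F : (ℝ × ℝ → ℝ) → ℝ × ℝ → ℝ} {Q : (ℝ × ℝ → ℝ) → ℝ} (hF : Controlled U (s + 1) F Q)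
    (n : ℕ) : Controlled U s (fun v => xPowDt n (F v)) Q :=
  hF.pdt.mul hU (Smooth.fst_pow n)

theorem pdt_xPowDt (hv : Smooth v) (n : ℕ) : pdt (xPowDt n v) = xPowDt n (pdt v) := by
  rw [xPowDt, xPowDt, pdt_mul (Smooth.fst_pow n) hv.pdt, pdt_fst_pow, zero_mul, zero_add]

theorem pdx_xPowDt (hv : Smooth v) (n : ℕ) :
    pdx (xPowDt n v) = xPowDt n (pdx v) + pdx (Prod.fst ^ n) * pdt v := by
  rw [xPowDt, pdx_mul (Smooth.fst_pow _) hv.pdt, ← pdt_pdx hv, xPowDt, add_comm]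

theorem pdx_xPowDt_succ (hv : Smooth v) (n : ℕ) :
    pdx (xPowDt (n + 1) v) = xPowDt (n + 1) (pdx v) + (n + 1 : ℝ × ℝ → ℝ) * xPowDt n v := by
  rw [pdx_xPowDt hv, pdx_fst_pow, mul_assoc, xPowDt.eq_def n]

theorem xPowDt_xPowDt (hv : Smooth v) (i j : ℕ) :
    xPowDt i (xPowDt j v) = Prod.fst ^ (i + j) * pdt (pdt v) := by
  rw [xPowDt, pdt_xPowDt hv, xPowDt, pow_add, mul_assoc]

theorem xPowDt_mul {c : ℝ × ℝ → ℝ} (hc : Smooth c) (hv : Smooth v) (n : ℕ) :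
    xPowDt n (c * v) = xPowDt n c * v + c * xPowDt n v := by
  rw [xPowDt, pdt_mul hc hv, xPowDt, xPowDt]
  ring

theorem xPowDt_add {w : ℝ × ℝ → ℝ} (hv : Smooth v) (hw : Smooth w) (n : ℕ) :
    xPowDt n (v + w) = xPowDt n v + xPowDt n w := by
  rw [xPowDt, pdt_add hv hw, mul_add, xPowDt, xPowDt]

/-- The Grushin operator `∂ₓ² + a (xⁿ ∂ₜ)²` with coefficient `a`. -/
noncomputable def grushin (n : ℕ) (a v : ℝ × ℝ → ℝ) : ℝ × ℝ → ℝ :=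
  pdx (pdx v) + a * xPowDt n (xPowDt n v)

theorem IsTestOn.grushin {a : ℝ × ℝ → ℝ} (hv : IsTestOn U v) (ha : Smooth a) (n : ℕ) :
    IsTestOn U (grushin n a v) :=
  hv.pdx.pdx.add (((hv.xPowDt n).xPowDt n).mul_left ha)

end Fields

/-! ### The anharmonic oscillator -/

theorem sq_le_half_add_pow (m : ℕ) (y : ℝ) : y ^ 2 ≤ 1 / 2 + 2 ^ m * y ^ (2 * m + 2) := by
  have key : (2 : ℝ) ^ m * y ^ (2 * m + 2) = (2 * y ^ 2) ^ m * y ^ 2 := by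
    rw [mul_pow, ← pow_mul]; ring
  rw [key]
  rcases le_total (y ^ 2) (1 / 2) with hy | hy
  · exact le_add_of_le_of_nonneg hy (by positivity)
  · have : 1 ≤ (2 * y ^ 2) ^ m := one_le_pow₀ (by linarith)
    nlinarith [sq_nonneg y]

theorem mul_pow_le_quarter_pow_add {k : ℝ} (hk : 1 ≤ k) (m : ℕ) (y : ℝ) :
    k * y ^ (2 * m) ≤ 1 / 4 * y ^ (4 * m + 4) + k * (4 * k) ^ m := by
  have key : y ^ (4 * m + 4) = (y ^ 2) ^ m * (y ^ 2) ^ (m + 2) := by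
    rw [← pow_add, ← pow_mul]; ring_nf
  rw [key, pow_mul]
  have hpow : 0 ≤ (y ^ 2) ^ m := by positivity
  rcases le_total (y ^ 2) (4 * k) with hy | hy
  · have h := mul_le_mul_of_nonneg_left (pow_le_pow_left₀ (sq_nonneg y) hy m) (by linarith : 0 ≤ k)
    exact h.trans (le_add_of_nonneg_left (by positivity))
  · have h : 4 * k ≤ (y ^ 2) ^ (m + 2) := hy.trans (le_self_pow₀ (by linarith) (by lia))
    have : 0 ≤ k * (4 * k) ^ m := by positivity
    nlinarith [mul_le_mul_of_nonneg_left h hpow]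

theorem intervalIntegral_eq_zero_of_hasDerivAt {g g' : ℝ → ℝ} {a b : ℝ}
    (hg : ∀ x, HasDerivAt g (g' x) x) (hg' : Continuous g') (ha : g a = 0) (hb : g b = 0) :
    ∫ x in a..b, g' x = 0 := by
  rw [intervalIntegral.integral_eq_sub_of_hasDerivAt (fun x _ => hg x)
    (hg'.intervalIntegrable a b), ha, hb, sub_zero]

section Oscillator

variable {E : Type*} [NormedAddCommGroup E] [InnerProductSpace ℝ E]

theorem two_mul_abs_inner_le (a b : E) : 2 * |⟪a, b⟫| ≤ ‖a‖ ^ 2 + ‖b‖ ^ 2 := by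
  nlinarith [abs_real_inner_le_norm a b, sq_nonneg (‖a‖ - ‖b‖)]

-- If `f' = f₁`, then `‖f‖² + 2x⟪f, f₁⟫` is the derivative of `x ‖f‖²`.
theorem norm_sq_le_add_dilation (m : ℕ) {ρ : ℝ} (hρ : 0 < ρ) (x : ℝ) (f f₁ : E) :
    ‖f‖ ^ 2 ≤ 2 * (‖f‖ ^ 2 + 2 * x * ⟪f, f₁⟫) + 2 * ρ ^ 2 * ‖f₁‖ ^ 2 +
      2 ^ (m + 1) / ρ ^ (2 * m + 2) * (x ^ (2 * m + 2) * ‖f‖ ^ 2) := by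
  have amgm :=
    (abs_le.1 (le_div_iff₀' two_pos |>.2 (two_mul_abs_inner_le ((x / ρ) • f) (ρ • f₁)))).1
  have hinner : ⟪(x / ρ) • f, ρ • f₁⟫ = x * ⟪f, f₁⟫ := by
    rw [real_inner_smul_left, real_inner_smul_right]; field_simp
  rw [hinner, norm_smul, norm_smul, mul_pow, mul_pow, Real.norm_eq_abs, Real.norm_eq_abs, sq_abs,
    sq_abs] at amgm
  have hx := mul_le_mul_of_nonneg_right (sq_le_half_add_pow m (x / ρ)) (sq_nonneg ‖f‖)
  have hpow : 2 ^ (m + 1) / ρ ^ (2 * m + 2) * (x ^ (2 * m + 2) * ‖f‖ ^ 2) =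
      2 * (2 ^ m * (x / ρ) ^ (2 * m + 2) * ‖f‖ ^ 2) := by
    rw [div_pow]; ring
  rw [hpow]
  linarith

variable {f f₁ f₂ : ℝ → E} {a b : ℝ}

/-- `IsDirichletTriple a b f f₁ f₂` says that `f` is a `C²` function with derivatives `f₁`
and `f₂` which vanishes at the end points of the interval `[a, b]`. -/
structure IsDirichletTriple (a b : ℝ) (f f₁ f₂ : ℝ → E) : Prop where
  le : a ≤ b
  hasDerivAt (x : ℝ) : HasDerivAt f (f₁ x) x
  hasDerivAt₁ (x : ℝ) : HasDerivAt f₁ (f₂ x) x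
  continuous₂ : Continuous f₂
  left : f a = 0
  right : f b = 0

namespace IsDirichletTriple

theorem continuous (h : IsDirichletTriple a b f f₁ f₂) : Continuous f :=
  continuous_iff_continuousAt.2 fun x => (h.hasDerivAt x).continuousAt

theorem continuous₁ (h : IsDirichletTriple a b f f₁ f₂) : Continuous f₁ :=
  continuous_iff_continuousAt.2 fun x => (h.hasDerivAt₁ x).continuousAt

theorem integral_energy (h : IsDirichletTriple a b f f₁ f₂) :
    ∫ x in a..b, (‖f₁ x‖ ^ 2 + ⟪f x, f₂ x⟫) = 0 := by
  have := h.continuous; have := h.continuous₁; have := h.continuous₂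
  refine intervalIntegral_eq_zero_of_hasDerivAt (g := fun x => ⟪f x, f₁ x⟫) (fun x =>
    ((h.hasDerivAt x).inner ℝ (h.hasDerivAt₁ x)).congr_deriv ?_) (by fun_prop) ?_ ?_
  · rw [real_inner_self_eq_norm_sq, add_comm]
  · simp [h.left]
  · simp [h.right]

theorem integral_weighted_energy (h : IsDirichletTriple a b f f₁ f₂) {V V₁ V₂ : ℝ → ℝ}
    (hV : ∀ x, HasDerivAt V (V₁ x) x) (hV₁ : ∀ x, HasDerivAt V₁ (V₂ x) x) (hV₂ : Continuous V₂) :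
    ∫ x in a..b, (V x * (‖f₁ x‖ ^ 2 + ⟪f x, f₂ x⟫) - 1 / 2 * (V₂ x * ‖f x‖ ^ 2)) = 0 := by
  have := h.continuous; have := h.continuous₁; have := h.continuous₂
  have : Continuous V := continuous_iff_continuousAt.2 fun x => (hV x).continuousAt
  refine intervalIntegral_eq_zero_of_hasDerivAt
    (g := fun x => V x * ⟪f x, f₁ x⟫ - 1 / 2 * (V₁ x * ‖f x‖ ^ 2)) (fun x =>
    (((hV x).mul ((h.hasDerivAt x).inner ℝ (h.hasDerivAt₁ x))).sub
      (((hV₁ x).mul (h.hasDerivAt x).norm_sq).const_mul _)).congr_deriv ?_) (by fun_prop) ?_ ?_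
  · rw [real_inner_self_eq_norm_sq]; ring
  · simp [h.left]
  · simp [h.right]

theorem integral_norm_sq_le (h : IsDirichletTriple a b f f₁ f₂) (m : ℕ) :
    ∫ x in a..b, ‖f x‖ ^ 2 ≤
      2 ^ (m + 1) * ∫ x in a..b, (‖f₁ x‖ ^ 2 + x ^ (2 * m + 2) * ‖f x‖ ^ 2) := by
  have := h.continuous; have := h.continuous₁
  have hdil : ∫ x in a..b, 2 * (‖f x‖ ^ 2 + 2 * x * ⟪f x, f₁ x⟫) = 0 := by
    refine intervalIntegral_eq_zero_of_hasDerivAt (g := fun x => 2 * (x * ‖f x‖ ^ 2)) (fun x =>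
      (((hasDerivAt_id x).mul (h.hasDerivAt x).norm_sq).const_mul 2).congr_deriv ?_)
      (by fun_prop) ?_ ?_
    · simp only [id_eq]; ring
    · simp [h.left]
    · simp [h.right]
  rw [← intervalIntegral.integral_const_mul, ← zero_add (∫ x in a..b, _ * _), ← hdil,
    ← intervalIntegral.integral_add (Continuous.intervalIntegrable (by fun_prop) _ _)
      (Continuous.intervalIntegrable (by fun_prop) _ _)]
  refine intervalIntegral.integral_mono h.le (Continuous.intervalIntegrable (by fun_prop) _ _)
    (Continuous.intervalIntegrable (by fun_prop) _ _) fun x => ?_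
  have hpow : (1 : ℝ) ≤ 2 ^ m := one_le_pow₀ one_le_two
  have hx := norm_sq_le_add_dilation m one_pos x (f x) (f₁ x)
  simp only [one_pow, div_one, pow_succ (2 : ℝ)] at hx ⊢
  nlinarith [sq_nonneg ‖f₁ x‖]

theorem integral_norm_sq_le_oscillator (h : IsDirichletTriple a b f f₁ f₂) (m : ℕ) :
    ∫ x in a..b, ‖f x‖ ^ 2 ≤
      (2 ^ (m + 1)) ^ 2 * ∫ x in a..b, ‖f₂ x - x ^ (2 * m + 2) • f x‖ ^ 2 := by
  have := h.continuous; have := h.continuous₁; have := h.continuous₂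
  set A : ℝ := 2 ^ (m + 1)
  have hA0 : 0 < A := by positivity
  have hmono : ∫ x in a..b, 2 * A * (‖f₁ x‖ ^ 2 + x ^ (2 * m + 2) * ‖f x‖ ^ 2) ≤
      ∫ x in a..b, (2 * A * (‖f₁ x‖ ^ 2 + ⟪f x, f₂ x⟫) +
        (‖f x‖ ^ 2 + A ^ 2 * ‖f₂ x - x ^ (2 * m + 2) • f x‖ ^ 2)) := by
    refine intervalIntegral.integral_mono h.le (Continuous.intervalIntegrable (by fun_prop) _ _)
      (Continuous.intervalIntegrable (by fun_prop) _ _) fun x => ?_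
    have amgm := neg_le_of_neg_le (neg_abs_le _) |>.trans
      (le_div_iff₀' two_pos |>.2 (two_mul_abs_inner_le (f x) (A • (f₂ x - x ^ (2 * m + 2) • f x))))
    rw [norm_smul, mul_pow, Real.norm_of_nonneg hA0.le, real_inner_smul_right, inner_sub_right,
      real_inner_smul_right, real_inner_self_eq_norm_sq] at amgm
    dsimp only
    linarith
  rw [intervalIntegral.integral_add (Continuous.intervalIntegrable (by fun_prop) _ _)
      (Continuous.intervalIntegrable (by fun_prop) _ _),
    intervalIntegral.integral_add (Continuous.intervalIntegrable (by fun_prop) _ _)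
      (Continuous.intervalIntegrable (by fun_prop) _ _), intervalIntegral.integral_const_mul,
    intervalIntegral.integral_const_mul, intervalIntegral.integral_const_mul,
    h.integral_energy] at hmono
  linarith [h.integral_norm_sq_le m]

theorem integral_pow_mul_norm_sq_le (h : IsDirichletTriple a b f f₁ f₂) (m : ℕ) {k : ℝ}
    (hk : k = (m + 1) * (2 * m + 1)) : k * ∫ x in a..b, x ^ (2 * m) * ‖f x‖ ^ 2 ≤
      1 / 2 * (∫ x in a..b, ‖f₂ x - x ^ (2 * m + 2) • f x‖ ^ 2) +
        2 * (k * (4 * k) ^ m) * ∫ x in a..b, ‖f x‖ ^ 2 := by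
  have := h.continuous; have := h.continuous₁; have := h.continuous₂
  have hk1 : 1 ≤ k := by rw [hk]; nlinarith [(Nat.cast_nonneg m : (0 : ℝ) ≤ m)]
  have henergy := h.integral_weighted_energy (V := fun x => x ^ (2 * m + 2))
    (V₁ := fun x => (2 * m + 2) * x ^ (2 * m + 1)) (V₂ := fun x => 2 * k * x ^ (2 * m))
    (fun x => by simpa using hasDerivAt_pow (2 * m + 2) x)
    (fun x => ((hasDerivAt_pow (2 * m + 1) x).const_mul _).congr_deriv
      (by rw [hk, Nat.add_sub_cancel]; push_cast; ring)) (by fun_prop)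
  rw [← zero_add (1 / 2 * _ + _), ← henergy, ← intervalIntegral.integral_const_mul,
    ← intervalIntegral.integral_const_mul, ← intervalIntegral.integral_const_mul,
    ← intervalIntegral.integral_add (Continuous.intervalIntegrable (by fun_prop) _ _)
      (Continuous.intervalIntegrable (by fun_prop) _ _),
    ← intervalIntegral.integral_add (Continuous.intervalIntegrable (by fun_prop) _ _)
      (Continuous.intervalIntegrable (by fun_prop) _ _)]
  refine intervalIntegral.integral_mono h.le (Continuous.intervalIntegrable (by fun_prop) _ _)
    (Continuous.intervalIntegrable (by fun_prop) _ _) fun x => ?_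
  have amgm := (neg_le_abs _).trans (le_div_iff₀' two_pos |>.2
    (two_mul_abs_inner_le (x ^ (2 * m + 2) • f x) (f₂ x - x ^ (2 * m + 2) • f x)))
  rw [norm_smul, mul_pow, Real.norm_eq_abs, sq_abs, real_inner_smul_left, inner_sub_right,
    real_inner_smul_right, real_inner_self_eq_norm_sq] at amgm
  have hpow := mul_le_mul_of_nonneg_right (mul_pow_le_quarter_pow_add hk1 m x) (sq_nonneg ‖f x‖)
  have hW : 0 ≤ x ^ (2 * m + 2) * ‖f₁ x‖ ^ 2 :=
    mul_nonneg (Even.pow_nonneg ⟨m + 1, by ring⟩ x) (sq_nonneg _)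
  have hsq : x ^ (4 * m + 4) = (x ^ (2 * m + 2)) ^ 2 := by rw [← pow_mul]; ring_nf
  rw [hsq] at hpow
  dsimp only
  linarith

theorem comp_mul_left (h : IsDirichletTriple a b f f₁ f₂) {ρ : ℝ} (hρ : 0 < ρ) :
    IsDirichletTriple (a / ρ) (b / ρ) (fun y => f (ρ * y)) (fun y => ρ • f₁ (ρ * y))
      (fun y => ρ ^ 2 • f₂ (ρ * y)) where
  le := div_le_div_of_nonneg_right h.le hρ.le
  hasDerivAt y := by
    simpa [Function.comp_def] using
      (h.hasDerivAt (ρ * y)).scomp y ((hasDerivAt_id y).const_mul ρ)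
  hasDerivAt₁ y := by
    simpa [Function.comp_def, sq, mul_smul, Pi.smul_def] using
      ((h.hasDerivAt₁ (ρ * y)).scomp y ((hasDerivAt_id y).const_mul ρ)).const_smul ρ
  continuous₂ := by have := h.continuous₂; fun_prop
  left := by simp only [mul_div_cancel₀ _ hρ.ne', h.left]
  right := by simp only [mul_div_cancel₀ _ hρ.ne', h.right]

end IsDirichletTriple

theorem exists_integral_pow_mul_norm_sq_le (E : Type*) [NormedAddCommGroup E]
    [InnerProductSpace ℝ E] (m : ℕ) :
    ∃ C > 0, ∀ {a b : ℝ} {f f₁ f₂ : ℝ → E}, IsDirichletTriple a b f f₁ f₂ →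
      ∫ x in a..b, x ^ (2 * m) * ‖f x‖ ^ 2 ≤
        C * ∫ x in a..b, ‖f₂ x - x ^ (2 * m + 2) • f x‖ ^ 2 := by
  set k : ℝ := (m + 1) * (2 * m + 1) with hk
  have hk1 : 1 ≤ k := by rw [hk]; nlinarith [(Nat.cast_nonneg m : (0 : ℝ) ≤ m)]
  refine ⟨1 / 2 + 2 * (k * (4 * k) ^ m) * (2 ^ (m + 1)) ^ 2, by positivity, fun h => ?_⟩
  have hweight := h.integral_pow_mul_norm_sq_le m hk
  have hnorm := mul_le_mul_of_nonneg_left (h.integral_norm_sq_le_oscillator m)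
    (by positivity : 0 ≤ 2 * (k * (4 * k) ^ m))
  refine (le_mul_of_one_le_left (intervalIntegral.integral_nonneg h.le fun x _ => ?_) hk1).trans ?_
  · exact mul_nonneg (Even.pow_nonneg (even_two_mul m) x) (sq_nonneg _)
  · linarith

theorem exists_pos_sq_mul_pow_eq_one {σ : ℝ} (hσ : σ ≠ 0) {n : ℕ} (hn : n ≠ 0) :
    ∃ ρ > 0, σ ^ 2 * ρ ^ n = 1 := by
  have hσ2 : 0 < σ ^ 2 := by positivity
  refine ⟨(σ ^ 2)⁻¹ ^ (n : ℝ)⁻¹, by positivity, ?_⟩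
  rw [Real.rpow_inv_natCast_pow (by positivity) hn, mul_inv_cancel₀ hσ2.ne']

-- The dilation `x = ρ y` with `σ² ρ ^ (2m + 4) = 1` reduces to `σ = 1`.
theorem exists_integral_norm_sq_le_scaled (E : Type*) [NormedAddCommGroup E]
    [InnerProductSpace ℝ E] (m : ℕ) :
    ∃ C > 0, ∀ (σ : ℝ) {a b : ℝ} {f f₁ f₂ : ℝ → E}, IsDirichletTriple a b f f₁ f₂ →
      ∫ x in a..b, ‖(σ * x ^ m) • f x‖ ^ 2 ≤
        C * ∫ x in a..b, ‖f₂ x - (σ ^ 2 * x ^ (2 * m + 2)) • f x‖ ^ 2 := by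
  obtain ⟨C, hC, hle⟩ := exists_integral_pow_mul_norm_sq_le E m
  refine ⟨C, hC, fun σ a b f f₁ f₂ h => ?_⟩
  obtain rfl | hσ := eq_or_ne σ 0
  · simpa using mul_nonneg hC.le (intervalIntegral.integral_nonneg h.le fun x _ => sq_nonneg _)
  obtain ⟨ρ, hρ, hσρ⟩ := exists_pos_sq_mul_pow_eq_one hσ (by lia : 2 * m + 4 ≠ 0)
  have hleft (y : ℝ) : y ^ (2 * m) * ‖f (ρ * y)‖ ^ 2 =
      ρ ^ 4 * ‖(σ * (ρ * y) ^ m) • f (ρ * y)‖ ^ 2 := by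
    rw [norm_smul, mul_pow ‖_‖, Real.norm_eq_abs, sq_abs]
    linear_combination (exp := 1) -(y ^ (2 * m) * ‖f (ρ * y)‖ ^ 2) * hσρ
  have hright (y : ℝ) : ‖ρ ^ 2 • f₂ (ρ * y) - y ^ (2 * m + 2) • f (ρ * y)‖ ^ 2 =
      ρ ^ 4 * ‖f₂ (ρ * y) - (σ ^ 2 * (ρ * y) ^ (2 * m + 2)) • f (ρ * y)‖ ^ 2 := by
    have hy : y ^ (2 * m + 2) = ρ ^ 2 * (σ ^ 2 * (ρ * y) ^ (2 * m + 2)) := by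
      linear_combination -y ^ (2 * m + 2) * hσρ
    rw [hy, mul_smul, ← smul_sub, norm_smul, mul_pow, Real.norm_of_nonneg (by positivity)]
    ring
  have hscaled := hle (h.comp_mul_left hρ)
  simp only [hleft, hright, intervalIntegral.integral_const_mul] at hscaled
  rw [intervalIntegral.integral_comp_mul_left (fun x => ‖(σ * x ^ m) • f x‖ ^ 2) hρ.ne',
    intervalIntegral.integral_comp_mul_left
      (fun x => ‖f₂ x - (σ ^ 2 * x ^ (2 * m + 2)) • f x‖ ^ 2) hρ.ne',
    mul_div_cancel₀ _ hρ.ne', mul_div_cancel₀ _ hρ.ne', smul_eq_mul, smul_eq_mul] at hscaled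
  have hpos : 0 < ρ ^ 4 * ρ⁻¹ := by positivity
  refine le_of_mul_le_mul_left ?_ hpos
  linarith

theorem exists_integral_norm_sq_le_of_hasCompactSupport (E : Type*) [NormedAddCommGroup E]
    [InnerProductSpace ℝ E] (m : ℕ) :
    ∃ C > 0, ∀ (σ : ℝ) {f f₁ f₂ : ℝ → E}, (∀ x, HasDerivAt f (f₁ x) x) →
      (∀ x, HasDerivAt f₁ (f₂ x) x) → Continuous f₂ → HasCompactSupport f →
      ∫ x, ‖(σ * x ^ m) • f x‖ ^ 2 ≤
        C * ∫ x, ‖f₂ x - (σ ^ 2 * x ^ (2 * m + 2)) • f x‖ ^ 2 := by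
  obtain ⟨C, hC, hle⟩ := exists_integral_norm_sq_le_scaled E m
  refine ⟨C, hC, fun σ f f₁ f₂ hf hf₁ hf₂ hsupp => ?_⟩
  obtain ⟨R, hR, hball⟩ := hsupp.isCompact.isBounded.subset_ball_lt 0 0
  rw [Real.ball_eq_Ioo, zero_sub, zero_add] at hball
  have hzero {x : ℝ} (hx : x ∉ Set.Ioo (-R) R) : f x = 0 :=
    image_eq_zero_of_notMem_tsupport fun h => hx (hball h)
  have hzero₂ {x : ℝ} (hx : x ∉ Set.Ioo (-R) R) : f₂ x = 0 := by
    rw [← (hf₁ x).deriv, funext fun x => (hf x).deriv.symm]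
    refine image_eq_zero_of_notMem_tsupport fun h => hx (hball ?_)
    exact tsupport_deriv_subset (tsupport_deriv_subset h)
  have htriple : IsDirichletTriple (-R) R f f₁ f₂ :=
    ⟨by linarith, hf, hf₁, hf₂, hzero (by simp), hzero (by simp)⟩
  convert hle σ htriple using 2
  · rw [intervalIntegral.integral_eq_integral_of_support_subset]
    intro x hx
    by_contra hx'
    exact hx (by simp [hzero fun h => hx' (Set.Ioo_subset_Ioc_self h)])
  · rw [intervalIntegral.integral_eq_integral_of_support_subset]
    intro x hx
    by_contra hx'
    exact hx (by simp [hzero fun h => hx' (Set.Ioo_subset_Ioc_self h),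
      hzero₂ fun h => hx' (Set.Ioo_subset_Ioc_self h)])

end Oscillator

/-! ### The partial Fourier transform -/

section PartialFourier

open scoped FourierTransform

/-- The Fourier transform of `f` in the variable `t`, with frequency `τ`. -/
noncomputable def partialFourier (f : ℝ × ℝ → ℝ) (τ x : ℝ) : ℂ := 𝓕 (fun t => (f (x, t) : ℂ)) τ

theorem partialFourier_eq_integral (f : ℝ × ℝ → ℝ) (τ x : ℝ) :
    partialFourier f τ x = ∫ t, (Real.fourierChar (-(t * τ)) : ℂ) * f (x, t) := by
  simp only [partialFourier, Real.fourier_real_eq, Circle.smul_def, smul_eq_mul]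

theorem partialFourier_mul_fst (q : ℝ → ℝ) (f : ℝ × ℝ → ℝ) (τ x : ℝ) :
    partialFourier (fun p => q p.1 * f p) τ x = q x * partialFourier f τ x := by
  rw [partialFourier_eq_integral, partialFourier_eq_integral, ← integral_const_mul]
  simp only [Complex.ofReal_mul, mul_left_comm]

theorem apply_eq_zero_of_snd_notMem {f : ℝ × ℝ → ℝ} (x : ℝ) {t : ℝ}
    (ht : t ∉ Prod.snd '' tsupport f) : f (x, t) = 0 :=
  image_eq_zero_of_notMem_tsupport fun h => ht ⟨_, h, rfl⟩

variable {U : Set (ℝ × ℝ)} {f g v : ℝ × ℝ → ℝ}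

namespace IsTestOn

theorem isCompact_snd_image (hf : IsTestOn U f) : IsCompact (Prod.snd '' tsupport f) :=
  hf.hasCompactSupport.isCompact.image continuous_snd

theorem hasCompactSupport_slice (hf : IsTestOn U f) (x : ℝ) :
    HasCompactSupport fun t => (f (x, t) : ℂ) :=
  HasCompactSupport.intro hf.isCompact_snd_image fun t ht => by
    rw [apply_eq_zero_of_snd_notMem x ht, Complex.ofReal_zero]

theorem contDiff_slice (hf : IsTestOn U f) (x : ℝ) : ContDiff ℝ ∞ fun t => (f (x, t) : ℂ) :=
  Complex.ofRealCLM.contDiff.comp (hf.smooth.comp (by fun_prop))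

theorem integrable_mul_slice (hf : IsTestOn U f) {k : ℝ → ℂ} (hk : Continuous k) (x : ℝ) :
    Integrable fun t => k t * f (x, t) :=
  (hk.mul (hf.contDiff_slice x).continuous).integrable_of_hasCompactSupport
    (hf.hasCompactSupport_slice x).mul_left

theorem integrable_slice (hf : IsTestOn U f) (x : ℝ) : Integrable fun t => (f (x, t) : ℂ) := by
  simpa using hf.integrable_mul_slice continuous_one x

theorem partialFourier_add (hf : IsTestOn U f) (hg : IsTestOn U g) (τ x : ℝ) :
    partialFourier (f + g) τ x = partialFourier f τ x + partialFourier g τ x := by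
  simp only [partialFourier_eq_integral, Pi.add_apply, Complex.ofReal_add, mul_add]
  exact integral_add (hf.integrable_mul_slice (by fun_prop) x)
    (hg.integrable_mul_slice (by fun_prop) x)

theorem partialFourier_pdt (hf : IsTestOn U f) (τ x : ℝ) :
    partialFourier (_root_.pdt f) τ x = 2 * Real.pi * Complex.I * τ * partialFourier f τ x := by
  have hderiv : (fun t => (_root_.pdt f (x, t) : ℂ)) = deriv fun t => (f (x, t) : ℂ) :=
    funext fun t => (hf.smooth.hasDerivAt_snd x t).ofReal_comp.deriv.symm
  rw [partialFourier, hderiv, Real.fourier_deriv (hf.integrable_slice x)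
    ((hf.contDiff_slice x).differentiable (by simp)) (hderiv ▸ hf.pdt.integrable_slice x)]
  rfl

theorem hasDerivAt_partialFourier (hf : IsTestOn U f) (τ x : ℝ) :
    HasDerivAt (partialFourier f τ) (partialFourier (_root_.pdx f) τ x) x := by
  have hc := hf.smooth.continuous
  have hc' := hf.pdx.smooth.continuous
  obtain ⟨M, hM⟩ := hf.pdx.hasCompactSupport.exists_bound_of_continuous hc'
  have hK := hf.pdx.isCompact_snd_image
  have hint : Integrable ((Prod.snd '' tsupport (_root_.pdx f)).indicator fun _ => M) :=
    (integrable_indicator_iff hK.measurableSet).2 (integrableOn_const hK.measure_lt_top.ne)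
  simp only [funext (partialFourier_eq_integral f τ), partialFourier_eq_integral]
  refine (hasDerivAt_integral_of_dominated_loc_of_deriv_le univ_mem
    (F := fun y t => (Real.fourierChar (-(t * τ)) : ℂ) * f (y, t))
    (F' := fun y t => (Real.fourierChar (-(t * τ)) : ℂ) * _root_.pdx f (y, t))
    (.of_forall fun y => Continuous.aestronglyMeasurable (by fun_prop))
    (hf.integrable_mul_slice (by fun_prop) x)
    (Continuous.aestronglyMeasurable (by fun_prop)) (.of_forall fun t y _ => ?_) hint
    (.of_forall fun t y _ => (hf.smooth.hasDerivAt_fst y t).ofReal_comp.const_mul _)).2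
  rw [norm_mul, Circle.norm_coe, one_mul, Complex.norm_real]
  by_cases ht : t ∈ Prod.snd '' tsupport (_root_.pdx f)
  · rw [Set.indicator_of_mem ht]
    exact hM _
  · rw [Set.indicator_of_notMem ht, apply_eq_zero_of_snd_notMem y ht, norm_zero]

theorem continuous_partialFourier (hf : IsTestOn U f) (τ : ℝ) : Continuous (partialFourier f τ) :=
  continuous_iff_continuousAt.2 fun x => (hf.hasDerivAt_partialFourier τ x).continuousAt

theorem hasCompactSupport_partialFourier (hf : IsTestOn U f) (τ : ℝ) :
    HasCompactSupport (partialFourier f τ) := by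
  refine HasCompactSupport.intro (hf.hasCompactSupport.isCompact.image continuous_fst)
    fun x hx => ?_
  have hzero (t : ℝ) : f (x, t) = 0 :=
    image_eq_zero_of_notMem_tsupport fun h => hx ⟨_, h, rfl⟩
  simp [partialFourier_eq_integral, hzero]

theorem stronglyMeasurable_partialFourier (hf : IsTestOn U f) :
    StronglyMeasurable fun q : ℝ × ℝ => partialFourier f q.1 q.2 := by
  have hc := hf.smooth.continuous
  simp only [partialFourier_eq_integral]
  exact StronglyMeasurable.integral_prod_right' (f := fun q : (ℝ × ℝ) × ℝ =>
    (Real.fourierChar (-(q.2 * q.1.1)) : ℂ) * (f (q.1.2, q.2) : ℂ))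
    (Continuous.stronglyMeasurable (by fun_prop))

theorem integrable_sq (hf : IsTestOn U f) : Integrable fun p => f p ^ 2 :=
  hf.memLp_two.integrable_sq

theorem integral_norm_sq_partialFourier_slice (hf : IsTestOn U f) (x : ℝ) :
    ∫ τ, ‖partialFourier f τ x‖ ^ 2 = ∫ t, f (x, t) ^ 2 := by
  have h := SchwartzMap.integral_norm_sq_fourier
    ((hf.hasCompactSupport_slice x).toSchwartzMap (hf.contDiff_slice x))
  simpa [SchwartzMap.fourier_coe, partialFourier] using! h

theorem integrable_norm_sq_partialFourier (hf : IsTestOn U f) :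
    Integrable (fun q : ℝ × ℝ => ‖partialFourier f q.1 q.2‖ ^ 2)
      ((volume : Measure ℝ).prod volume) := by
  refine (integrable_prod_iff' ?_).2 ⟨.of_forall fun x => ?_, ?_⟩
  · exact (hf.stronglyMeasurable_partialFourier.norm.pow 2).aestronglyMeasurable
  · have h := (𝓕 ((hf.hasCompactSupport_slice x).toSchwartzMap (hf.contDiff_slice x))).memLp 2
      (volume : Measure ℝ)
    exact (memLp_two_iff_integrable_sq_norm h.1).1 h
  · simp only [norm_pow, norm_norm, hf.integral_norm_sq_partialFourier_slice]
    exact hf.integrable_sq.integral_prod_left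

theorem integral_integral_norm_sq_partialFourier (hf : IsTestOn U f) :
    ∫ τ, ∫ x, ‖partialFourier f τ x‖ ^ 2 = sobolevNorm 0 f ^ 2 := by
  rw [integral_integral_swap hf.integrable_norm_sq_partialFourier, sobolevNorm_zero_sq]
  simp only [hf.integral_norm_sq_partialFourier_slice]
  exact (integral_prod _ hf.integrable_sq).symm

end IsTestOn

theorem mul_norm_sq_partialFourier_xPowDt (hv : IsTestOn U v) (m : ℕ) {a : ℝ} (ha : 0 ≤ a)
    (τ x : ℝ) : a * ‖partialFourier (xPowDt m v) τ x‖ ^ 2 =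
      ‖(√a * (2 * Real.pi * τ) * x ^ m) • partialFourier v τ x‖ ^ 2 := by
  rw [show xPowDt m v = fun p => p.1 ^ m * pdt v p from rfl,
    partialFourier_mul_fst (· ^ m), hv.partialFourier_pdt]
  simp only [norm_mul, norm_smul, mul_pow, Complex.norm_real, Complex.norm_I, Complex.norm_ofNat,
    Real.norm_eq_abs, sq_abs, Real.sq_sqrt ha]
  ring

theorem partialFourier_grushin (hv : IsTestOn U v) (m : ℕ) {a : ℝ} (ha : 0 ≤ a)
    (τ x : ℝ) : partialFourier (grushin (m + 1) (fun _ => a) v) τ x =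
      partialFourier (pdx (pdx v)) τ x -
        ((√a * (2 * Real.pi * τ)) ^ 2 * x ^ (2 * m + 2)) • partialFourier v τ x := by
  have hYY : (fun _ => a) * xPowDt (m + 1) (xPowDt (m + 1) v) =
      fun p => a * p.1 ^ (2 * m + 2) * pdt (pdt v) p := by
    funext p
    simp only [xPowDt_xPowDt hv.smooth, Pi.mul_apply, Pi.pow_apply]
    ring_nf
  rw [grushin, hv.pdx.pdx.partialFourier_add
    (((hv.xPowDt _).xPowDt _).mul_left (contDiff_const (c := a))), hYY,
    partialFourier_mul_fst (fun x => a * x ^ (2 * m + 2)), hv.pdt.partialFourier_pdt,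
    hv.partialFourier_pdt, mul_pow, Real.sq_sqrt ha]
  simp only [Complex.real_smul]
  push_cast
  linear_combination (exp := 1) (a * x ^ (2 * m + 2) * (2 * Real.pi * τ) ^ 2 *
    partialFourier v τ x : ℂ) * Complex.I_sq

theorem exists_mul_sobolevNorm_xPowDt_sq_le (m : ℕ) :
    ∃ C > 0, ∀ {a : ℝ} {U : Set (ℝ × ℝ)} {v : ℝ × ℝ → ℝ}, 0 ≤ a → IsTestOn U v →
      a * sobolevNorm 0 (xPowDt m v) ^ 2 ≤
        C * sobolevNorm 0 (grushin (m + 1) (fun _ => a) v) ^ 2 := by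
  obtain ⟨C, hC, hle⟩ := exists_integral_norm_sq_le_of_hasCompactSupport ℂ m
  refine ⟨C, hC, fun {a U v} ha hv => ?_⟩
  have hw : IsTestOn U (grushin (m + 1) (fun _ => a) v) := hv.grushin contDiff_const _
  rw [← (hv.xPowDt m).integral_integral_norm_sq_partialFourier,
    ← hw.integral_integral_norm_sq_partialFourier, ← integral_const_mul, ← integral_const_mul]
  refine integral_mono
    ((hv.xPowDt m).integrable_norm_sq_partialFourier.integral_prod_left.const_mul a)
    (hw.integrable_norm_sq_partialFourier.integral_prod_left.const_mul C) fun τ => ?_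
  simp only [← integral_const_mul a, mul_norm_sq_partialFourier_xPowDt hv m ha,
    partialFourier_grushin hv m ha]
  exact hle _ (hv.hasDerivAt_partialFourier τ) (hv.pdx.hasDerivAt_partialFourier τ)
    (hv.pdx.pdx.continuous_partialFourier τ) (hv.hasCompactSupport_partialFourier τ)

end PartialFourier

/-! ### Grushin operators with constant coefficient -/

section ConstantCoefficient

variable {U : Set (ℝ × ℝ)} {c f v : ℝ × ℝ → ℝ}

theorem IsTestOn.sq (hf : IsTestOn U f) : IsTestOn U (f ^ 2) :=
  _root_.sq f ▸ hf.mul_left hf.smooth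

theorem integral_mul_mul_pdx_self (hc : Smooth c) (hf : IsTestOn U f) :
    ∫ p, c p * f p * pdx f p = -(∫ p, pdx c p * f p ^ 2) / 2 := by
  have h := IsTestOn.integral_mul_pdx (hc.mul hf.smooth) hf
  have hcff : Integrable fun p => pdx c p * f p ^ 2 := (hf.sq.mul_left hc.pdx).integrable
  have hcffx : Integrable fun p => c p * f p * pdx f p :=
    (hf.pdx.mul_left (hc.mul hf.smooth)).integrable
  have hsplit : ∫ p, pdx (c * f) p * f p = (∫ p, pdx c p * f p ^ 2) + ∫ p, c p * f p * pdx f p := by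
    rw [pdx_mul hc hf.smooth, ← integral_add hcff hcffx]
    congr 1 with p
    simp only [Pi.add_apply, Pi.mul_apply]
    ring
  simp only [Pi.mul_apply] at h
  linarith

theorem integral_mul_pdx_pdx_mul_pdt_pdt (hc : Smooth c) (hct : pdt c = 0) (hf : IsTestOn U f) :
    ∫ p, c p * pdx (pdx f) p * pdt (pdt f) p =
      (∫ p, c p * pdx (pdt f) p ^ 2) - (∫ p, pdx (pdx c) p * pdt f p ^ 2) / 2 := by
  have ht : ∫ p, c p * pdx (pdx f) p * pdt (pdt f) p =
      -∫ p, c p * pdt f p * pdx (pdx (pdt f)) p := by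
    refine (IsTestOn.integral_mul_pdt (hc.mul hf.smooth.pdx.pdx) hf.pdt).trans ?_
    rw [pdt_mul hc hf.smooth.pdx.pdx, hct, pdt_pdx hf.smooth.pdx, pdt_pdx hf.smooth]
    simp only [zero_mul, zero_add, Pi.mul_apply, mul_right_comm]
  have hx : ∫ p, c p * pdt f p * pdx (pdx (pdt f)) p =
      -((∫ p, c p * pdx (pdt f) p ^ 2) + ∫ p, pdx c p * pdt f p * pdx (pdt f) p) := by
    have hsq : Integrable fun p => c p * pdx (pdt f) p ^ 2 :=
      (hf.pdt.pdx.sq.mul_left hc).integrable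
    have hmul : Integrable fun p => pdx c p * pdt f p * pdx (pdt f) p :=
      (hf.pdt.pdx.mul_left (hc.pdx.mul hf.smooth.pdt)).integrable
    refine (IsTestOn.integral_mul_pdx (hc.mul hf.smooth.pdt) hf.pdt.pdx).trans ?_
    rw [pdx_mul hc hf.smooth.pdt, ← integral_add hsq hmul]
    congr 2 with p
    simp only [Pi.add_apply, Pi.mul_apply]
    ring
  rw [ht, hx, integral_mul_mul_pdx_self hc.pdx hf.pdt]
  ring

theorem IsTestOn.sobolevNorm_zero_add_const_mul_sq (hf : IsTestOn U f) (hv : IsTestOn U v)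
    (a : ℝ) : sobolevNorm 0 (f + (fun _ => a) * v) ^ 2 =
      sobolevNorm 0 f ^ 2 + 2 * a * (∫ p, f p * v p) + a ^ 2 * sobolevNorm 0 v ^ 2 := by
  have hfv : Integrable fun p => 2 * a * (f p * v p) :=
    (hv.mul_left hf.smooth).integrable.const_mul _
  have hvv : Integrable fun p => a ^ 2 * v p ^ 2 := hv.integrable_sq.const_mul _
  simp only [sobolevNorm_zero_sq, ← integral_const_mul]
  rw [← integral_add hf.integrable_sq hfv, ← integral_add (by exact hf.integrable_sq.add hfv) hvv]
  congr 1 with p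
  simp only [Pi.add_apply, Pi.mul_apply]
  ring

theorem pdx_pdx_fst_pow (n : ℕ) :
    pdx (pdx (Prod.fst ^ (n + 2))) = fun p : ℝ × ℝ => (n + 2) * (n + 1) * p.1 ^ n := by
  funext p
  simp [pdx, mul_assoc]

theorem sobolevNorm_zero_grushin_const_sq (hv : IsTestOn U v) (m : ℕ) (a : ℝ) :
    sobolevNorm 0 (grushin (m + 1) (fun _ => a) v) ^ 2 =
      sobolevNorm 0 (pdx (pdx v)) ^ 2 + 2 * a * sobolevNorm 0 (xPowDt (m + 1) (pdx v)) ^ 2 +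
        a ^ 2 * sobolevNorm 0 (xPowDt (m + 1) (xPowDt (m + 1) v)) ^ 2 -
        2 * a * ((m + 1) * (2 * m + 1)) * sobolevNorm 0 (xPowDt m v) ^ 2 := by
  have hcross : ∫ p, pdx (pdx v) p * xPowDt (m + 1) (xPowDt (m + 1) v) p =
      sobolevNorm 0 (xPowDt (m + 1) (pdx v)) ^ 2 -
        (m + 1) * (2 * m + 1) * sobolevNorm 0 (xPowDt m v) ^ 2 := by
    rw [sobolevNorm_zero_sq, sobolevNorm_zero_sq, ← integral_const_mul, xPowDt_xPowDt hv.smooth]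
    convert integral_mul_pdx_pdx_mul_pdt_pdt (Smooth.fst_pow (2 * m + 2)) (pdt_fst_pow _) hv
      using 1
    · congr 1 with p
      simp only [Pi.mul_apply, Pi.pow_apply]
      ring
    · rw [pdx_pdx_fst_pow, ← integral_div]
      congr 2 with p
      all_goals
        simp only [xPowDt, pdt_pdx hv.smooth, Pi.mul_apply, Pi.pow_apply]
        push_cast
        ring
  rw [grushin, hv.pdx.pdx.sobolevNorm_zero_add_const_mul_sq ((hv.xPowDt _).xPowDt _), hcross]
  ring

/-- The sum of the squares of the quantities that bound a test function maximally with respect to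
the Grushin operator of order `m + 1`. The third one is, up to a factor, the commutator of `∂ₓ` and
`xᵐ⁺¹ ∂ₜ`. -/
noncomputable def maximalDensity (m : ℕ) (v : ℝ × ℝ → ℝ) : ℝ × ℝ → ℝ :=
  pdx (pdx v) ^ 2 + xPowDt (m + 1) (pdx v) ^ 2 + xPowDt m v ^ 2 +
    xPowDt (m + 1) (xPowDt (m + 1) v) ^ 2

theorem IsTestOn.maximalDensity (hv : IsTestOn U v) (m : ℕ) : IsTestOn U (maximalDensity m v) :=
  ((hv.pdx.pdx.sq.add (hv.pdx.xPowDt _).sq).add (hv.xPowDt _).sq).add ((hv.xPowDt _).xPowDt _).sq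

theorem integral_maximalDensity (hv : IsTestOn U v) (m : ℕ) :
    ∫ p, maximalDensity m v p = sobolevNorm 0 (pdx (pdx v)) ^ 2 +
      sobolevNorm 0 (xPowDt (m + 1) (pdx v)) ^ 2 + sobolevNorm 0 (xPowDt m v) ^ 2 +
      sobolevNorm 0 (xPowDt (m + 1) (xPowDt (m + 1) v)) ^ 2 := by
  have h₁ := hv.pdx.pdx.sq
  have h₂ := (hv.pdx.xPowDt (m + 1)).sq
  have h₃ := (hv.xPowDt m).sq
  have h₄ := ((hv.xPowDt (m + 1)).xPowDt (m + 1)).sq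
  simp only [sobolevNorm_zero_sq]
  rw [maximalDensity, integral_add' ((h₁.add h₂).add h₃).integrable h₄.integrable,
    integral_add' (h₁.add h₂).integrable h₃.integrable, integral_add' h₁.integrable h₂.integrable]
  rfl

theorem exists_integral_maximalDensity_le_grushin_const (m : ℕ) :
    ∃ C > 0, ∀ {a : ℝ} {U : Set (ℝ × ℝ)} {v : ℝ × ℝ → ℝ}, 1 ≤ a → IsTestOn U v →
      ∫ p, maximalDensity m v p ≤ C * sobolevNorm 0 (grushin (m + 1) (fun _ => a) v) ^ 2 := by
  obtain ⟨C, hC, hle⟩ := exists_mul_sobolevNorm_xPowDt_sq_le m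
  refine ⟨1 + (2 * ((m + 1) * (2 * m + 1)) + 1) * C, by positivity, fun {a U v} ha hv => ?_⟩
  have hlow := hle (by linarith) hv
  have hid := sobolevNorm_zero_grushin_const_sq hv m a
  rw [integral_maximalDensity hv]
  set A := sobolevNorm 0 (xPowDt (m + 1) (pdx v)) ^ 2
  set B := sobolevNorm 0 (xPowDt m v) ^ 2
  set D := sobolevNorm 0 (xPowDt (m + 1) (xPowDt (m + 1) v)) ^ 2
  have hA : A ≤ 2 * a * A := le_mul_of_one_le_left (sq_nonneg _) (by linarith)
  have hB : B ≤ a * B := le_mul_of_one_le_left (sq_nonneg _) ha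
  have hD : D ≤ a ^ 2 * D := le_mul_of_one_le_left (sq_nonneg _) (one_le_pow₀ ha)
  have hk : (2 * ((m + 1) * (2 * m + 1)) + 1) * (a * B) ≤
      (2 * ((m + 1) * (2 * m + 1)) + 1) *
        (C * sobolevNorm 0 (grushin (m + 1) (fun _ => a) v) ^ 2) :=
    mul_le_mul_of_nonneg_left hlow (by positivity)
  linarith

end ConstantCoefficient

/-! ### Localisation to variable coefficients -/

/-- The part `‖v‖ + ‖∂ₓv‖ + ‖xⁿ∂ₜv‖` of first order in the fields, in the norm of `H^s`. -/
noncomputable def firstOrderNorm (n s : ℕ) (v : ℝ × ℝ → ℝ) : ℝ :=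
  sobolevNorm s v + sobolevNorm s (pdx v) + sobolevNorm s (xPowDt n v)

/-- The right-hand side of the maximal estimate for the Grushin operator: its `H^s` graph norm,
strengthened by the terms of first order. -/
noncomputable def graphNorm (n : ℕ) (a : ℝ × ℝ → ℝ) (s : ℕ) (v : ℝ × ℝ → ℝ) : ℝ :=
  sobolevNorm s (grushin n a v) + firstOrderNorm n s v

section Localisation

variable {U : Set (ℝ × ℝ)} {n m s : ℕ} {a χ v : ℝ × ℝ → ℝ}

theorem firstOrderNorm_nonneg : 0 ≤ firstOrderNorm n s v :=
  add_nonneg (add_nonneg sobolevNorm_nonneg sobolevNorm_nonneg) sobolevNorm_nonneg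

theorem graphNorm_nonneg : 0 ≤ graphNorm n a s v :=
  add_nonneg sobolevNorm_nonneg firstOrderNorm_nonneg

theorem controlled_self : Controlled U s (fun v => v) (firstOrderNorm n s) :=
  .of_le id fun v _ => by
    rw [firstOrderNorm]
    linarith [sobolevNorm_nonneg (s := s) (f := pdx v),
      sobolevNorm_nonneg (s := s) (f := xPowDt n v)]

theorem controlled_pdx : Controlled U s pdx (firstOrderNorm n s) :=
  .of_le IsTestOn.pdx fun v _ => by
    rw [firstOrderNorm]
    linarith [sobolevNorm_nonneg (s := s) (f := v), sobolevNorm_nonneg (s := s) (f := xPowDt n v)]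

theorem controlled_xPowDt : Controlled U s (xPowDt n) (firstOrderNorm n s) :=
  .of_le (IsTestOn.xPowDt · n) fun v _ => by
    rw [firstOrderNorm]
    linarith [sobolevNorm_nonneg (s := s) (f := v), sobolevNorm_nonneg (s := s) (f := pdx v)]

theorem controlled_grushin (ha : Smooth a) : Controlled U s (grushin n a) (graphNorm n a s) :=
  .of_le (IsTestOn.grushin · ha n) fun _ _ => le_add_of_nonneg_right firstOrderNorm_nonneg

theorem firstOrderNorm_isBigO_graphNorm :
    firstOrderNorm n s =O[testFilter U] graphNorm n a s :=
  isBigO_of_le _ fun v => by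
    rw [Real.norm_of_nonneg firstOrderNorm_nonneg, Real.norm_of_nonneg graphNorm_nonneg]
    exact le_add_of_nonneg_left sobolevNorm_nonneg

theorem grushin_mul (hχ : Smooth χ) (hv : Smooth v) :
    grushin n a (χ * v) = χ * grushin n a v + 2 * pdx χ * pdx v +
      2 * a * xPowDt n χ * xPowDt n v + grushin n a χ * v := by
  have hY := hχ.xPowDt n
  rw [grushin, pdx_mul hχ hv, pdx_add (hχ.pdx.mul hv) (hχ.mul hv.pdx), pdx_mul hχ.pdx hv,
    pdx_mul hχ hv.pdx, xPowDt_mul hχ hv,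
    xPowDt_add (hY.mul hv) (hχ.mul (hv.xPowDt n)),
    xPowDt_mul hY hv, xPowDt_mul hχ (hv.xPowDt n), grushin, grushin]
  ring

theorem controlled_grushin_mul (hU : Bornology.IsBounded U) (ha : Smooth a) (hχ : Smooth χ) :
    Controlled U s (fun v => grushin n a (χ * v)) (graphNorm n a s) := by
  have hlow := firstOrderNorm_isBigO_graphNorm (U := U) (n := n) (s := s) (a := a)
  have htwo : Smooth 2 := contDiff_const
  refine ((((controlled_grushin ha).mul hU hχ).add ((controlled_pdx.trans hlow).mul hU
    (htwo.mul hχ.pdx))).add ((controlled_xPowDt.trans hlow).mul hU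
    ((htwo.mul ha).mul (hχ.xPowDt n)))).add ((controlled_self.trans hlow).mul hU
    ((hχ.pdx.pdx.add (ha.mul ((hχ.xPowDt n).xPowDt n))))) |>.congr fun v hv => ?_
  exact grushin_mul hχ hv.smooth

theorem IsTestOn.sobolevNorm_zero_add_sq_le {f g : ℝ × ℝ → ℝ} (hf : IsTestOn U f)
    (hg : IsTestOn U g) :
    sobolevNorm 0 (f + g) ^ 2 ≤ 2 * (sobolevNorm 0 f ^ 2 + sobolevNorm 0 g ^ 2) := by
  have h := hf.sobolevNorm_add_le (s := 0) hg
  rw [pow_zero, one_mul] at h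
  exact (pow_le_pow_left₀ sobolevNorm_nonneg h 2).trans add_sq_le

/-- The coefficient is frozen at `q`; on a small ball the error is absorbed. -/
theorem exists_integral_maximalDensity_le_grushin_nhds (m : ℕ) (ha : Smooth a)
    (ha1 : ∀ p, 1 ≤ a p) (q : ℝ × ℝ) :
    ∃ C > 0, ∃ δ > 0, ∀ v, IsTestOn (Metric.ball q δ) v →
      ∫ p, maximalDensity m v p ≤ C * sobolevNorm 0 (grushin (m + 1) a v) ^ 2 := by
  obtain ⟨C, hC, hle⟩ := exists_integral_maximalDensity_le_grushin_const m
  obtain ⟨δ, hδ, hball⟩ := Metric.continuous_iff.1 ha.continuous q (1 / (2 * √C)) (by positivity)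
  refine ⟨4 * C, by positivity, δ, hδ, fun v hv => ?_⟩
  have hYY := (hv.xPowDt (m + 1)).xPowDt (m + 1)
  have hdiff : Smooth fun p => a q - a p := contDiff_const.sub ha
  have hfreeze : grushin (m + 1) (fun _ => a q) v =
      grushin (m + 1) a v + (fun p => a q - a p) * xPowDt (m + 1) (xPowDt (m + 1) v) := by
    funext p
    simp only [grushin, Pi.add_apply, Pi.mul_apply]
    ring
  set H := sobolevNorm 0 (grushin (m + 1) a v) ^ 2
  set D := sobolevNorm 0 (xPowDt (m + 1) (xPowDt (m + 1) v)) ^ 2 with hD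
  have herr : sobolevNorm 0 ((fun p => a q - a p) * xPowDt (m + 1) (xPowDt (m + 1) v)) ^ 2 ≤
      1 / (4 * C) * D := by
    have h := hYY.sobolevNorm_zero_mul_le (C := 1 / (2 * √C)) (by positivity) hdiff fun p hp => by
      rw [abs_sub_comm]
      exact (hball p hp).le
    refine (pow_le_pow_left₀ sobolevNorm_nonneg h 2).trans_eq ?_
    rw [mul_pow, div_pow, mul_pow, Real.sq_sqrt hC.le, hD]
    norm_num
  have hD_le : D ≤ ∫ p, maximalDensity m v p := by
    rw [integral_maximalDensity hv]
    exact le_add_of_nonneg_left (by positivity)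
  have habsorb : ∫ p, maximalDensity m v p ≤ 2 * C * H + D / 2 := by
    calc ∫ p, maximalDensity m v p
      _ ≤ C * sobolevNorm 0 (grushin (m + 1) (fun _ => a q) v) ^ 2 := hle (ha1 q) hv
      _ ≤ C * (2 * (H + 1 / (4 * C) * D)) := by
        rw [hfreeze]
        refine mul_le_mul_of_nonneg_left (((hv.grushin ha _).sobolevNorm_zero_add_sq_le
          (hYY.mul_left hdiff)).trans ?_) hC.le
        gcongr
      _ = 2 * C * H + D / 2 := by field_simp; ring
  linarith

theorem pdx_eventuallyEq {f g : ℝ × ℝ → ℝ} {p : ℝ × ℝ} (hf : Smooth f) (hg : Smooth g)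
    (h : f =ᶠ[nhds p] g) : pdx f =ᶠ[nhds p] pdx g := by
  rw [pdx_eq_fderiv hf, pdx_eq_fderiv hg]
  exact h.fderiv.fun_comp (· (1, 0))

theorem pdt_eventuallyEq {f g : ℝ × ℝ → ℝ} {p : ℝ × ℝ} (hf : Smooth f) (hg : Smooth g)
    (h : f =ᶠ[nhds p] g) : pdt f =ᶠ[nhds p] pdt g := by
  rw [pdt_eq_fderiv hf, pdt_eq_fderiv hg]
  exact h.fderiv.fun_comp (· (0, 1))

theorem maximalDensity_congr {f g : ℝ × ℝ → ℝ} {p : ℝ × ℝ} (hf : Smooth f) (hg : Smooth g)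
    (h : f =ᶠ[nhds p] g) : maximalDensity m f p = maximalDensity m g p := by
  have hx := pdx_eventuallyEq hf hg h
  have ht := pdt_eventuallyEq hf hg h
  simp only [maximalDensity, xPowDt_xPowDt hf, xPowDt_xPowDt hg]
  simp only [xPowDt, Pi.add_apply, Pi.mul_apply, Pi.pow_apply, ht.eq_of_nhds,
    (pdx_eventuallyEq hf.pdx hg.pdx hx).eq_of_nhds, (pdt_eventuallyEq hf.pdx hg.pdx hx).eq_of_nhds,
    (pdt_eventuallyEq hf.pdt hg.pdt ht).eq_of_nhds]

theorem maximalDensity_nonneg (p : ℝ × ℝ) : 0 ≤ maximalDensity m v p := by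
  simp only [maximalDensity, Pi.add_apply, Pi.pow_apply]
  positivity

theorem exists_setIntegral_maximalDensity_le (hU : Bornology.IsBounded U) (ha : Smooth a)
    (ha1 : ∀ p, 1 ≤ a p) (m : ℕ) (q : ℝ × ℝ) :
    ∃ V ∈ nhds q, ∃ C, ∀ v, IsTestOn U v →
      ∫ p in V, maximalDensity m v p ≤ C * graphNorm (m + 1) a 0 v ^ 2 := by
  obtain ⟨C, hC, δ, hδ, hle⟩ := exists_integral_maximalDensity_le_grushin_nhds m ha ha1 q
  let χ : ContDiffBump q := ⟨δ / 4, δ / 2, by positivity, by linarith⟩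
  obtain ⟨D, hD⟩ := isBigO_principal.1
    (controlled_grushin_mul (s := 0) (n := m + 1) hU ha χ.contDiff).isBigO
  refine ⟨Metric.ball q (δ / 4), Metric.ball_mem_nhds q (by positivity), C * D ^ 2,
    fun v hv => ?_⟩
  have hχv : IsTestOn U (χ * v) := hv.mul_left χ.contDiff
  have hlocal : IsTestOn (Metric.ball q δ) (χ * v) := by
    refine ⟨hχv.smooth, hχv.hasCompactSupport, (tsupport_mul_subset_left (f := χ)).trans ?_⟩
    rw [χ.tsupport_eq]
    exact Metric.closedBall_subset_ball (by change δ / 2 < δ; linarith)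
  calc ∫ p in Metric.ball q (δ / 4), maximalDensity m v p
    _ = ∫ p in Metric.ball q (δ / 4), maximalDensity m (χ * v) p :=
      setIntegral_congr_fun measurableSet_ball fun p hp => by
        refine maximalDensity_congr hv.smooth hχv.smooth ?_
        filter_upwards [χ.eventuallyEq_one_of_mem_ball hp] with y hy
        simp [hy]
    _ ≤ ∫ p, maximalDensity m (χ * v) p :=
      setIntegral_le_integral (hχv.maximalDensity m).integrable (.of_forall maximalDensity_nonneg)
    _ ≤ C * sobolevNorm 0 (grushin (m + 1) a (χ * v)) ^ 2 := hle _ hlocal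
    _ ≤ C * D ^ 2 * graphNorm (m + 1) a 0 v ^ 2 := by
      have h := hD v hv
      rw [Real.norm_of_nonneg sobolevNorm_nonneg, Real.norm_of_nonneg graphNorm_nonneg] at h
      rw [mul_assoc, ← mul_pow]
      exact mul_le_mul_of_nonneg_left (pow_le_pow_left₀ sobolevNorm_nonneg h 2) hC.le

theorem setIntegral_union_le {α : Type*} [MeasurableSpace α] {μ : Measure α} {f : α → ℝ}
    (hf : Integrable f μ) (h0 : ∀ x, 0 ≤ f x) (s t : Set α) :
    ∫ x in s ∪ t, f x ∂μ ≤ (∫ x in s, f x ∂μ) + ∫ x in t, f x ∂μ := by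
  rw [← integral_add_measure hf.restrict hf.restrict]
  exact integral_mono_measure (Measure.restrict_union_le s t) (.of_forall h0)
    (hf.restrict.add_measure hf.restrict)

theorem exists_integral_maximalDensity_le (hU : Bornology.IsBounded U) (ha : Smooth a)
    (ha1 : ∀ p, 1 ≤ a p) (m : ℕ) :
    ∃ C, ∀ v, IsTestOn U v → ∫ p, maximalDensity m v p ≤ C * graphNorm (m + 1) a 0 v ^ 2 := by
  have hcompact : ∃ C, ∀ v, IsTestOn U v →
      ∫ p in closure U, maximalDensity m v p ≤ C * graphNorm (m + 1) a 0 v ^ 2 := by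
    refine hU.isCompact_closure.induction_on
      (p := fun S => ∃ C, ∀ v, IsTestOn U v →
        ∫ p in S, maximalDensity m v p ≤ C * graphNorm (m + 1) a 0 v ^ 2)
      ⟨0, by simp⟩ ?mono ?union fun q _ => ?nhds
    case mono =>
      rintro S T hST ⟨C, hC⟩
      exact ⟨C, fun v hv => (setIntegral_mono_set (hv.maximalDensity m).integrable.integrableOn
        (.of_forall maximalDensity_nonneg) hST.eventuallyLE).trans (hC v hv)⟩
    case union =>
      rintro S T ⟨C, hC⟩ ⟨D, hD⟩
      exact ⟨C + D, fun v hv => (setIntegral_union_le (hv.maximalDensity m).integrable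
        maximalDensity_nonneg S T).trans (by linarith [hC v hv, hD v hv])⟩
    case nhds =>
      obtain ⟨V, hV, hle⟩ := exists_setIntegral_maximalDensity_le hU ha ha1 m q
      exact ⟨V, mem_nhdsWithin_of_mem_nhds hV, hle⟩
  obtain ⟨C, hC⟩ := hcompact
  refine ⟨C, fun v hv => le_of_eq_of_le (setIntegral_eq_integral_of_forall_compl_eq_zero ?_).symm
    (hC v hv)⟩
  exact fun p hp => image_eq_zero_of_notMem_tsupport fun h =>
    hp (subset_closure ((hv.maximalDensity m).tsupport_subset h))

/-- The maximal estimate in `H^s` for the Grushin operator of order `m + 1` with coefficient `a`: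
its graph norm controls everything of second order in the fields, commutators included. -/
structure MaximalEstimate (U : Set (ℝ × ℝ)) (m : ℕ) (a : ℝ × ℝ → ℝ) (s : ℕ) : Prop where
  pdx_pdx : Controlled U s (fun v => pdx (pdx v)) (graphNorm (m + 1) a s)
  xPowDt_pdx : Controlled U s (fun v => xPowDt (m + 1) (pdx v)) (graphNorm (m + 1) a s)
  xPowDt_pred : Controlled U s (xPowDt m) (graphNorm (m + 1) a s)
  xPowDt_xPowDt : Controlled U s (fun v => xPowDt (m + 1) (xPowDt (m + 1) v))
    (graphNorm (m + 1) a s)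

theorem maximalEstimate_zero (hU : Bornology.IsBounded U) (ha : Smooth a) (ha1 : ∀ p, 1 ≤ a p)
    (m : ℕ) : MaximalEstimate U m a 0 := by
  obtain ⟨C, hC⟩ := exists_integral_maximalDensity_le hU ha ha1 m
  have of_sq_le {F : (ℝ × ℝ → ℝ) → ℝ × ℝ → ℝ} (hF : ∀ {v}, IsTestOn U v → IsTestOn U (F v))
      (hle : ∀ v, IsTestOn U v → sobolevNorm 0 (F v) ^ 2 ≤ ∫ p, maximalDensity m v p) :
      Controlled U 0 F (graphNorm (m + 1) a 0) :=
    ⟨hF, isBigO_principal.2 ⟨√C, fun v hv => by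
      rw [Real.norm_of_nonneg sobolevNorm_nonneg, Real.norm_of_nonneg graphNorm_nonneg,
        ← Real.sqrt_sq graphNorm_nonneg, ← Real.sqrt_mul' _ (sq_nonneg _)]
      exact Real.le_sqrt_of_sq_le ((hle v hv).trans (hC v hv))⟩⟩
  refine ⟨of_sq_le (·.pdx.pdx) fun v hv => ?_, of_sq_le (·.pdx.xPowDt _) fun v hv => ?_,
    of_sq_le (·.xPowDt _) fun v hv => ?_, of_sq_le ((·.xPowDt _ |>.xPowDt _)) fun v hv => ?_⟩
  all_goals
    rw [integral_maximalDensity hv]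
    linarith [sq_nonneg (sobolevNorm 0 (pdx (pdx v))), sq_nonneg (sobolevNorm 0 (xPowDt m v)),
      sq_nonneg (sobolevNorm 0 (xPowDt (m + 1) (pdx v))),
      sq_nonneg (sobolevNorm 0 (xPowDt (m + 1) (xPowDt (m + 1) v)))]

end Localisation

/-! ### Higher Sobolev norms -/

section HigherOrder

variable {U : Set (ℝ × ℝ)} {n m s : ℕ} {a v : ℝ × ℝ → ℝ}

theorem pdx_xPowDt_xPowDt (hv : Smooth v) (n : ℕ) :
    pdx (xPowDt n (xPowDt n v)) =
      xPowDt n (xPowDt n (pdx v)) + 2 * pdx (Prod.fst ^ n) * pdt (xPowDt n v) := by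
  have hc : xPowDt n (pdx (Prod.fst ^ n)) = 0 := by
    rw [xPowDt, pdt_pdx (Smooth.fst_pow n), pdt_fst_pow]
    funext p
    simp [pdx]
  rw [pdx_xPowDt (hv.xPowDt n), pdx_xPowDt hv,
    xPowDt_add (hv.pdx.xPowDt n) ((Smooth.fst_pow n).pdx.mul hv.pdt),
    xPowDt_mul (Smooth.fst_pow n).pdx hv.pdt, pdt_xPowDt hv, hc]
  ring

theorem grushin_pdt (ha : Smooth a) (hv : Smooth v) (n : ℕ) :
    grushin n a (pdt v) = pdt (grushin n a v) + -pdt a * xPowDt n (xPowDt n v) := by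
  have hY := hv.xPowDt n
  rw [grushin, grushin, pdt_add hv.pdx.pdx (ha.mul (hY.xPowDt n)), pdt_mul ha (hY.xPowDt n),
    pdt_pdx hv.pdx, pdt_pdx hv, pdt_xPowDt hY, pdt_xPowDt hv]
  ring

theorem grushin_pdx (ha : Smooth a) (hv : Smooth v) (n : ℕ) :
    grushin n a (pdx v) = pdx (grushin n a v) + -pdx a * xPowDt n (xPowDt n v) +
      -2 * a * pdx (Prod.fst ^ n) * pdt (xPowDt n v) := by
  have hYY := (hv.xPowDt n).xPowDt n
  rw [grushin, grushin, pdx_add hv.pdx.pdx (ha.mul hYY), pdx_mul ha hYY, pdx_xPowDt_xPowDt hv]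
  ring

theorem graphNorm_isBigO_of_le {s' : ℕ} (h : s ≤ s') :
    graphNorm n a s =O[testFilter U] graphNorm n a s' :=
  isBigO_of_le _ fun v => by
    rw [Real.norm_of_nonneg graphNorm_nonneg, Real.norm_of_nonneg graphNorm_nonneg, graphNorm,
      graphNorm, firstOrderNorm, firstOrderNorm]
    gcongr <;> exact sobolevNorm_mono h

theorem graphNorm_comp_isBigO {D : (ℝ × ℝ → ℝ) → ℝ × ℝ → ℝ} {Q : (ℝ × ℝ → ℝ) → ℝ}
    (hP : Controlled U s (fun v => grushin n a (D v)) Q) (hD : Controlled U s D Q)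
    (hx : Controlled U s (fun v => pdx (D v)) Q) (ht : Controlled U s (fun v => xPowDt n (D v)) Q) :
    (fun v => graphNorm n a s (D v)) =O[testFilter U] Q :=
  hP.isBigO.add ((hD.isBigO.add hx.isBigO).add ht.isBigO)

theorem graphNorm_pdt_isBigO (hU : Bornology.IsBounded U) (ha : Smooth a) :
    (fun v => graphNorm n a s (pdt v)) =O[testFilter U] graphNorm n a (s + 1) := by
  have hlow := firstOrderNorm_isBigO_graphNorm (U := U) (n := n) (s := s + 1) (a := a)
  have hself := controlled_self.trans hlow
  have hx := controlled_pdx.trans hlow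
  have hY := controlled_xPowDt.trans hlow
  refine graphNorm_comp_isBigO ?_ hself.pdt (hx.pdt.congr fun v hv => (pdt_pdx hv.smooth).symm)
    (hY.pdt.congr fun v hv => (pdt_xPowDt hv.smooth n).symm)
  exact ((controlled_grushin ha).pdt.add ((hY.xPowDt hU n).mul hU ha.pdt.neg)).congr
    fun v hv => grushin_pdt ha hv.smooth n

theorem graphNorm_pdx_isBigO (hU : Bornology.IsBounded U) (ha : Smooth a) :
    (fun v => graphNorm n a s (pdx v)) =O[testFilter U] graphNorm n a (s + 1) := by
  have hlow := firstOrderNorm_isBigO_graphNorm (U := U) (n := n) (s := s + 1) (a := a)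
  have hx := controlled_pdx.trans hlow
  have hY := controlled_xPowDt.trans hlow
  have hc : Smooth (-2 * a * pdx (Prod.fst ^ n)) :=
    (contDiff_const.neg.mul ha).mul (Smooth.fst_pow n).pdx
  refine graphNorm_comp_isBigO ?_ hx.of_succ hx.pdx (hx.xPowDt hU n)
  exact (((controlled_grushin ha).pdx.add ((hY.xPowDt hU n).mul hU ha.pdx.neg)).add
    (hY.pdt.mul hU hc)).congr fun v hv => grushin_pdx ha hv.smooth n

theorem Controlled.succ_of_commutator (hU : Bornology.IsBounded U) (ha : Smooth a)
    {F E : (ℝ × ℝ → ℝ) → ℝ × ℝ → ℝ} (hF : Controlled U s F (graphNorm n a s))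
    (hE : Controlled U s E (graphNorm n a (s + 1)))
    (hFx : ∀ v, IsTestOn U v → _root_.pdx (F v) = F (_root_.pdx v) + E v)
    (hFt : ∀ v, IsTestOn U v → _root_.pdt (F v) = F (_root_.pdt v)) :
    Controlled U (s + 1) F (graphNorm n a (s + 1)) :=
  (hF.trans (graphNorm_isBigO_of_le s.le_succ)).succ
    ((((hF.comp IsTestOn.pdx).trans (graphNorm_pdx_isBigO hU ha)).add hE).congr hFx)
    (((hF.comp IsTestOn.pdt).trans (graphNorm_pdt_isBigO hU ha)).congr hFt)

theorem MaximalEstimate.succ (hU : Bornology.IsBounded U) (ha : Smooth a)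
    (h : MaximalEstimate U m a s) : MaximalEstimate U m a (s + 1) := by
  have hlow := firstOrderNorm_isBigO_graphNorm (U := U) (n := m + 1) (s := s + 1) (a := a)
  have hself := controlled_self.trans hlow
  have hx := controlled_pdx.trans hlow
  have hY := controlled_xPowDt.trans hlow
  constructor
  · refine (h.pdx_pdx.trans (graphNorm_isBigO_of_le s.le_succ)).succ
      ((h.pdx_pdx.comp IsTestOn.pdx).trans (graphNorm_pdx_isBigO hU ha))
      (((h.pdx_pdx.comp IsTestOn.pdt).trans (graphNorm_pdt_isBigO hU ha)).congr
        fun v hv => ?_)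
    rw [pdt_pdx hv.smooth.pdx, pdt_pdx hv.smooth]
  · refine h.xPowDt_pdx.succ_of_commutator hU ha (hx.pdt.mul hU (Smooth.fst_pow (m + 1)).pdx)
      (fun v hv => pdx_xPowDt hv.smooth.pdx _) fun v hv => ?_
    rw [pdt_xPowDt hv.smooth.pdx, pdt_pdx hv.smooth]
  · exact h.xPowDt_pred.succ_of_commutator hU ha (hself.pdt.mul hU (Smooth.fst_pow m).pdx)
      (fun v hv => pdx_xPowDt hv.smooth m) fun v hv => pdt_xPowDt hv.smooth m
  · refine h.xPowDt_xPowDt.succ_of_commutator hU ha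
      (hY.pdt.mul hU (contDiff_const.mul (Smooth.fst_pow (m + 1)).pdx))
      (fun v hv => pdx_xPowDt_xPowDt hv.smooth _) fun v hv => ?_
    rw [pdt_xPowDt (hv.smooth.xPowDt _), pdt_xPowDt hv.smooth]

theorem maximalEstimate (hU : Bornology.IsBounded U) (ha : Smooth a) (ha1 : ∀ p, 1 ≤ a p)
    (m s : ℕ) : MaximalEstimate U m a s := by
  induction s with
  | zero => exact maximalEstimate_zero hU ha ha1 m
  | succ s ih => exact ih.succ hU ha

end HigherOrder

/-! ### Interpolation -/

/-- `N` has relative bound zero with respect to `Q`, modulo `M`, on `C₀^∞(U)`; this is Kato's notion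
of relative boundedness, with a general functional `M` in place of the ambient norm. -/
def HasZeroRelativeBound (U : Set (ℝ × ℝ)) (N Q M : (ℝ × ℝ → ℝ) → ℝ) : Prop :=
  ∀ ε > 0, ∃ C ≥ 0, ∀ v, IsTestOn U v → N v ≤ ε * Q v + C * M v

namespace HasZeroRelativeBound

variable {U : Set (ℝ × ℝ)} {N N' Q R M M' : (ℝ × ℝ → ℝ) → ℝ}

theorem refl (hQ : ∀ v, 0 ≤ Q v) : HasZeroRelativeBound U M Q M := fun ε hε =>
  ⟨1, zero_le_one, fun v _ => by linarith [mul_nonneg hε.le (hQ v)]⟩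

theorem of_sq_le (hQ : ∀ v, 0 ≤ Q v) (hM : ∀ v, 0 ≤ M v)
    (h : ∀ v, IsTestOn U v → N v ^ 2 ≤ M v * Q v) : HasZeroRelativeBound U N Q M := fun ε hε => by
  refine ⟨1 / ε, by positivity, fun v hv => ?_⟩
  have hεQ := mul_nonneg hε.le (hQ v)
  have hεM := mul_nonneg (one_div_pos.2 hε).le (hM v)
  refine (Real.le_sqrt_of_sq_le (h v hv)).trans (Real.sqrt_le_iff.2 ⟨add_nonneg hεQ hεM, ?_⟩)
  have hprod : M v * Q v = (ε * Q v) * (1 / ε * M v) := by field_simp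
  nlinarith

theorem add (h : HasZeroRelativeBound U N Q M) (h' : HasZeroRelativeBound U N' Q M) :
    HasZeroRelativeBound U (fun v => N v + N' v) Q M := fun ε hε => by
  obtain ⟨C, hC, hN⟩ := h (ε / 2) (half_pos hε)
  obtain ⟨C', hC', hN'⟩ := h' (ε / 2) (half_pos hε)
  exact ⟨C + C', add_nonneg hC hC', fun v hv => by linarith [hN v hv, hN' v hv]⟩

theorem comp {D : (ℝ × ℝ → ℝ) → ℝ × ℝ → ℝ} (h : HasZeroRelativeBound U N Q M)
    (hD : ∀ {v}, IsTestOn U v → IsTestOn U (D v)) :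
    HasZeroRelativeBound U (fun v => N (D v)) (fun v => Q (D v)) (fun v => M (D v)) :=
  fun ε hε => (h ε hε).imp fun _ hC => ⟨hC.1, fun _ hv => hC.2 _ (hD hv)⟩

theorem mono_left (h : HasZeroRelativeBound U N' Q M) (hN' : ∀ v, 0 ≤ N' v)
    (hN : N =O[testFilter U] N') : HasZeroRelativeBound U N Q M := fun ε hε => by
  obtain ⟨c, hc, hle⟩ := hN.exists_pos
  obtain ⟨C, hC, hbound⟩ := h (ε / c) (div_pos hε hc)
  refine ⟨c * C, mul_nonneg hc.le hC, fun v hv => ?_⟩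
  calc N v ≤ ‖N v‖ := Real.le_norm_self _
    _ ≤ c * N' v := by
      simpa only [Real.norm_of_nonneg (hN' v)] using isBigOWith_principal.1 hle v hv
    _ ≤ c * (ε / c * Q v + C * M v) := mul_le_mul_of_nonneg_left (hbound v hv) hc.le
    _ = ε * Q v + c * C * M v := by field_simp

theorem mono_right (h : HasZeroRelativeBound U N Q M) (hR : ∀ v, 0 ≤ R v)
    (hQ : Q =O[testFilter U] R) : HasZeroRelativeBound U N R M := fun ε hε => by
  obtain ⟨c, hc, hle⟩ := hQ.exists_pos
  obtain ⟨C, hC, hbound⟩ := h (ε / c) (div_pos hε hc)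
  refine ⟨C, hC, fun v hv => (hbound v hv).trans (add_le_add_left ?_ _)⟩
  have hQR : Q v ≤ c * R v := (Real.le_norm_self _).trans <| by
    simpa only [Real.norm_of_nonneg (hR v)] using isBigOWith_principal.1 hle v hv
  calc ε / c * Q v ≤ ε / c * (c * R v) := by gcongr
    _ = ε * R v := by field_simp

theorem trans (h : HasZeroRelativeBound U N Q M) (hQ : ∀ v, 0 ≤ Q v)
    (hM : HasZeroRelativeBound U M Q M') : HasZeroRelativeBound U N Q M' := fun ε hε => by
  obtain ⟨C, hC, hN⟩ := h (ε / 2) (half_pos hε)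
  obtain ⟨C', hC', hM⟩ := hM (ε / (2 * (C + 1))) (by positivity)
  refine ⟨C * C', mul_nonneg hC hC', fun v hv => ?_⟩
  have hsmall : C * (ε / (2 * (C + 1))) ≤ ε / 2 := by
    rw [mul_div_assoc', div_le_div_iff₀ (by positivity) two_pos]
    linarith
  calc N v ≤ ε / 2 * Q v + C * M v := hN v hv
    _ ≤ ε / 2 * Q v + C * (ε / (2 * (C + 1)) * Q v + C' * M' v) := by
        gcongr
        exact hM v hv
    _ = ε / 2 * Q v + C * (ε / (2 * (C + 1))) * Q v + C * C' * M' v := by ring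
    _ ≤ ε / 2 * Q v + ε / 2 * Q v + C * C' * M' v := by
        gcongr
        exact hQ v
    _ = ε * Q v + C * C' * M' v := by ring

theorem absorb (h : HasZeroRelativeBound U N (fun v => Q v + N v) M) :
    HasZeroRelativeBound U N Q M := fun ε hε => by
  obtain ⟨C, hC, hN⟩ := h (ε / (1 + ε)) (by positivity)
  refine ⟨(1 + ε) * C, by positivity, fun v hv => ?_⟩
  have hle := mul_le_mul_of_nonneg_left (hN v hv) (by positivity : 0 ≤ 1 + ε)
  have heq : (1 + ε) * (ε / (1 + ε) * (Q v + N v) + C * M v) =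
      ε * Q v + ε * N v + (1 + ε) * C * M v := by field_simp
  linarith

end HasZeroRelativeBound

section Interpolation

variable {U : Set (ℝ × ℝ)} {m s : ℕ} {a f v : ℝ × ℝ → ℝ}

theorem sobolevNorm_zero_pdx_sq_le (hv : IsTestOn U v) :
    sobolevNorm 0 (pdx v) ^ 2 ≤ sobolevNorm 0 v * sobolevNorm 0 (pdx (pdx v)) :=
  calc sobolevNorm 0 (pdx v) ^ 2 = ∫ p, pdx v p * pdx v p := by
        rw [sobolevNorm_zero_sq]; simp only [sq]
    _ = -∫ p, pdx (pdx v) p * v p := IsTestOn.integral_mul_pdx hv.pdx.smooth hv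
    _ ≤ sobolevNorm 0 (pdx (pdx v)) * sobolevNorm 0 v :=
        (neg_le_abs _).trans (hv.pdx.pdx.abs_integral_mul_le hv)
    _ = sobolevNorm 0 v * sobolevNorm 0 (pdx (pdx v)) := mul_comm _ _

theorem sobolevNorm_zero_xPowDt_sq_le (hv : IsTestOn U v) (n : ℕ) :
    sobolevNorm 0 (xPowDt n v) ^ 2 ≤ sobolevNorm 0 v * sobolevNorm 0 (xPowDt n (xPowDt n v)) := by
  have hY := hv.xPowDt n
  have hibp := IsTestOn.integral_mul_pdt ((Smooth.fst_pow n).mul hY.smooth) hv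
  rw [pdt_mul (Smooth.fst_pow n) hY.smooth, pdt_fst_pow, zero_mul, zero_add] at hibp
  calc sobolevNorm 0 (xPowDt n v) ^ 2
      = ∫ p, p.1 ^ n * xPowDt n v p * pdt v p := by
        rw [sobolevNorm_zero_sq]
        refine integral_congr_ae (.of_forall fun p => ?_)
        simp only [xPowDt, Pi.mul_apply, Pi.pow_apply]
        ring
    _ = -∫ p, xPowDt n (xPowDt n v) p * v p := hibp
    _ ≤ sobolevNorm 0 (xPowDt n (xPowDt n v)) * sobolevNorm 0 v :=
        (neg_le_abs _).trans ((hY.xPowDt n).abs_integral_mul_le hv)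
    _ = sobolevNorm 0 v * sobolevNorm 0 (xPowDt n (xPowDt n v)) := mul_comm _ _

theorem sobolevNorm_zero_sq_le_dilation (hf : IsTestOn U f) (m : ℕ) {ρ : ℝ} (hρ : 0 < ρ) :
    sobolevNorm 0 f ^ 2 ≤ 2 * ρ ^ 2 * sobolevNorm 0 (pdx f) ^ 2 +
      2 ^ (m + 1) / ρ ^ (2 * m + 2) * sobolevNorm 0 (Prod.fst ^ (m + 1) * f) ^ 2 := by
  have hff : Integrable fun p => f p ^ 2 := hf.integrable_sq
  have hfx : Integrable fun p => 2 * (p.1 * f p * pdx f p) :=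
    (hf.pdx.mul_left (contDiff_fst.mul hf.smooth)).integrable.const_mul 2
  have hdil : ∫ p, (f p ^ 2 + 2 * (p.1 * f p * pdx f p)) = 0 := by
    have hibp := integral_mul_mul_pdx_self contDiff_fst hf
    have hone : pdx Prod.fst = 1 := funext fun p => deriv_id p.1
    simp only [hone, Pi.one_apply, one_mul] at hibp
    rw [integral_add hff hfx, integral_const_mul, hibp]
    ring
  have hpt (p : ℝ × ℝ) := norm_sq_le_add_dilation m hρ p.1 (f p) (pdx f p)
  simp only [Real.norm_eq_abs, sq_abs, Real.inner_apply] at hpt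
  set K : ℝ := 2 ^ (m + 1) / ρ ^ (2 * m + 2)
  have hint : Integrable fun p => 2 * (f p ^ 2 + 2 * (p.1 * f p * pdx f p)) :=
    (hff.add hfx).const_mul 2
  have hx2 : Integrable fun p => 2 * ρ ^ 2 * pdx f p ^ 2 := hf.pdx.integrable_sq.const_mul _
  have hsum : Integrable fun p =>
      2 * (f p ^ 2 + 2 * (p.1 * f p * pdx f p)) + 2 * ρ ^ 2 * pdx f p ^ 2 := hint.add hx2
  have hY2 : Integrable fun p => K * (p.1 ^ (m + 1) * f p) ^ 2 :=
    (hf.mul_left (Smooth.fst_pow (m + 1))).integrable_sq.const_mul K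
  calc sobolevNorm 0 f ^ 2 = ∫ p, f p ^ 2 := sobolevNorm_zero_sq
    _ ≤ ∫ p, (2 * (f p ^ 2 + 2 * (p.1 * f p * pdx f p)) + 2 * ρ ^ 2 * pdx f p ^ 2 +
          K * (p.1 ^ (m + 1) * f p) ^ 2) := by
        refine integral_mono hff (hsum.add hY2) fun p =>
          (hpt p).trans_eq ?_
        ring
    _ = 2 * ρ ^ 2 * sobolevNorm 0 (pdx f) ^ 2 +
          K * sobolevNorm 0 (Prod.fst ^ (m + 1) * f) ^ 2 := by
        rw [integral_add hsum hY2, integral_add hint hx2, integral_const_mul, hdil,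
          integral_const_mul, integral_const_mul, sobolevNorm_zero_sq, sobolevNorm_zero_sq,
          mul_zero, zero_add]
        rfl

theorem hasZeroRelativeBound_pdt (U : Set (ℝ × ℝ)) (m : ℕ) :
    HasZeroRelativeBound U (fun v => sobolevNorm 0 (pdt v)) (fun v => sobolevNorm 1 (pdx v))
      (fun v => sobolevNorm 0 (xPowDt (m + 1) v)) := fun ε hε => by
  have hρ : 0 < ε / 2 := half_pos hε
  set C : ℝ := 2 ^ (m + 1) / (ε / 2) ^ (2 * m + 2)
  have hC : 0 ≤ C := by positivity
  refine ⟨√C, Real.sqrt_nonneg C, fun v hv => ?_⟩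
  have hle := sobolevNorm_zero_sq_le_dilation hv.pdt m hρ
  have hA := sobolevNorm_nonneg (s := 1) (f := pdx v)
  have hB := sobolevNorm_nonneg (s := 0) (f := xPowDt (m + 1) v)
  have hx : sobolevNorm 0 (pdx (pdt v)) ≤ sobolevNorm 1 (pdx v) :=
    pdt_pdx hv.smooth ▸ sobolevNorm_pdt_le
  refine (Real.le_sqrt_of_sq_le hle).trans (Real.sqrt_le_iff.2 ⟨?_, ?_⟩)
  · positivity
  · calc 2 * (ε / 2) ^ 2 * sobolevNorm 0 (pdx (pdt v)) ^ 2 +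
          C * sobolevNorm 0 (xPowDt (m + 1) v) ^ 2
        ≤ 2 * (ε / 2) ^ 2 * sobolevNorm 1 (pdx v) ^ 2 +
          √C ^ 2 * sobolevNorm 0 (xPowDt (m + 1) v) ^ 2 := by
          rw [Real.sq_sqrt hC]
          gcongr
          exact sobolevNorm_nonneg
      _ ≤ (ε * sobolevNorm 1 (pdx v) + √C * sobolevNorm 0 (xPowDt (m + 1) v)) ^ 2 := by
          have : 0 ≤ ε * sobolevNorm 1 (pdx v) * (√C * sobolevNorm 0 (xPowDt (m + 1) v)) := by
            positivity
          nlinarith [sq_nonneg (ε * sobolevNorm 1 (pdx v))]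

theorem hasZeroRelativeBound_firstOrderNorm_zero (hU : Bornology.IsBounded U) (ha : Smooth a)
    (ha1 : ∀ p, 1 ≤ a p) (m : ℕ) :
    HasZeroRelativeBound U (firstOrderNorm (m + 1) 0) (graphNorm (m + 1) a 0) (sobolevNorm 0) := by
  have hmax := maximalEstimate hU ha ha1 m 0
  have hx : HasZeroRelativeBound U (fun v => sobolevNorm 0 (pdx v)) _ (sobolevNorm 0) :=
    .of_sq_le (fun _ => sobolevNorm_nonneg) (fun _ => sobolevNorm_nonneg)
      fun _ hv => sobolevNorm_zero_pdx_sq_le hv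
  have hY : HasZeroRelativeBound U (fun v => sobolevNorm 0 (xPowDt (m + 1) v)) _ (sobolevNorm 0) :=
    .of_sq_le (fun _ => sobolevNorm_nonneg) (fun _ => sobolevNorm_nonneg)
      fun _ hv => sobolevNorm_zero_xPowDt_sq_le hv (m + 1)
  exact ((HasZeroRelativeBound.refl fun _ => graphNorm_nonneg).add
    (hx.mono_right (fun _ => graphNorm_nonneg) hmax.pdx_pdx.isBigO)).add
    (hY.mono_right (fun _ => graphNorm_nonneg) hmax.xPowDt_xPowDt.isBigO)

theorem firstOrderNorm_succ_isBigO {n : ℕ} (hU : Bornology.IsBounded U) :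
    firstOrderNorm n (s + 1) =O[testFilter U] fun v =>
      firstOrderNorm n s v + firstOrderNorm n s (pdx v) + firstOrderNorm n s (pdt v) := by
  set Q : (ℝ × ℝ → ℝ) → ℝ := fun v =>
    firstOrderNorm n s v + firstOrderNorm n s (pdx v) + firstOrderNorm n s (pdt v) with hQ
  have isBigO_of_le {D : (ℝ × ℝ → ℝ) → ℝ × ℝ → ℝ} (hD : ∀ v, firstOrderNorm n s (D v) ≤ Q v) :
      (fun v => firstOrderNorm n s (D v)) =O[testFilter U] Q :=
    isBigO_of_le _ fun v => by
      rw [Real.norm_of_nonneg firstOrderNorm_nonneg]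
      exact (hD v).trans (le_abs_self _)
  have h0 (v : ℝ × ℝ → ℝ) : 0 ≤ firstOrderNorm n s v := firstOrderNorm_nonneg
  have h : firstOrderNorm n s =O[testFilter U] Q :=
    isBigO_of_le (D := id) fun v => by simp only [hQ, id]; linarith [h0 (pdx v), h0 (pdt v)]
  have hx : (fun v => firstOrderNorm n s (pdx v)) =O[testFilter U] Q :=
    isBigO_of_le fun v => by linarith [h0 v, h0 (pdt v)]
  have ht : (fun v => firstOrderNorm n s (pdt v)) =O[testFilter U] Q :=
    isBigO_of_le fun v => by linarith [h0 v, h0 (pdx v)]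
  have hself : Controlled U (s + 1) (fun v => v) Q :=
    (controlled_self.trans h).succ ((controlled_self.comp IsTestOn.pdx).trans hx)
      ((controlled_self.comp IsTestOn.pdt).trans ht)
  have hpdx : Controlled U (s + 1) pdx Q :=
    (controlled_pdx.trans h).succ ((controlled_pdx.comp IsTestOn.pdx).trans hx)
      (((controlled_pdx.comp IsTestOn.pdt).trans ht).congr fun _ hv => pdt_pdx hv.smooth)
  have hxPowDt : Controlled U (s + 1) (xPowDt n) Q :=
    (controlled_xPowDt.trans h).succ
      ((((controlled_xPowDt.comp IsTestOn.pdx).trans hx).add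
        (hself.pdt.mul hU (Smooth.fst_pow n).pdx)).congr fun _ hv => pdx_xPowDt hv.smooth n)
      (((controlled_xPowDt.comp IsTestOn.pdt).trans ht).congr
        fun _ hv => pdt_xPowDt hv.smooth n)
  exact (hself.isBigO.add hpdx.isBigO).add hxPowDt.isBigO

theorem hasZeroRelativeBound_firstOrderNorm (hU : Bornology.IsBounded U) (ha : Smooth a)
    (ha1 : ∀ p, 1 ≤ a p) (m s : ℕ) :
    HasZeroRelativeBound U (firstOrderNorm (m + 1) s) (graphNorm (m + 1) a s) (sobolevNorm 0) := by
  have hzero := hasZeroRelativeBound_firstOrderNorm_zero hU ha ha1 m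
  induction s with
  | zero => exact hzero
  | succ s ih =>
    have hgraph : ∀ v, 0 ≤ graphNorm (m + 1) a (s + 1) v := fun _ => graphNorm_nonneg
    have hzero' := hzero.mono_right hgraph (graphNorm_isBigO_of_le (s + 1).zero_le)
    have hx := ((ih.comp IsTestOn.pdx).mono_right hgraph (graphNorm_pdx_isBigO hU ha)).trans hgraph
      (hzero'.mono_left (fun _ => firstOrderNorm_nonneg) controlled_pdx.isBigO)
    have hpdt := (hasZeroRelativeBound_pdt U m).mono_right hgraph
      ((controlled_pdx.trans firstOrderNorm_isBigO_graphNorm).isBigO.trans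
        (graphNorm_isBigO_of_le (Nat.le_add_left 1 s)))
    have ht := ((ih.comp IsTestOn.pdt).mono_right hgraph (graphNorm_pdt_isBigO hU ha)).trans hgraph
      (hpdt.trans hgraph
        (hzero'.mono_left (fun _ => firstOrderNorm_nonneg) controlled_xPowDt.isBigO))
    have hsum := ((ih.mono_right hgraph (graphNorm_isBigO_of_le s.le_succ)).add hx).add ht
    exact hsum.mono_left
      (fun _ => add_nonneg (add_nonneg firstOrderNorm_nonneg firstOrderNorm_nonneg)
        firstOrderNorm_nonneg) (firstOrderNorm_succ_isBigO hU)

end Interpolation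

/-! ### The quasilinear operator -/

/-- The coefficient `h̃(x, t, u(x, t))` by which `X₃` differs from `X₂`. -/
def fieldCoeff (h : ℝ × ℝ × ℝ → ℝ) (u : ℝ × ℝ → ℝ) (p : ℝ × ℝ) : ℝ :=
  h (p.1, p.2, u p)

theorem HasZeroRelativeBound.exists_forall_add_mul_le {U : Set (ℝ × ℝ)}
    {T S L Q M : (ℝ × ℝ → ℝ) → ℝ} (hT : T =O[testFilter U] fun v => Q v + L v)
    (hL : HasZeroRelativeBound U L Q M) (hS : HasZeroRelativeBound U S Q M)
    (hQL : ∀ v, 0 ≤ Q v + L v) (hM : ∀ v, 0 ≤ M v) :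
    ∃ C > 0, ∀ K > 0, ∃ C' > 0, ∀ v, IsTestOn U v → T v + K * S v ≤ C * Q v + C' * M v := by
  obtain ⟨c, hc, hTle⟩ := hT.exists_pos
  obtain ⟨C₁, hC₁, hLle⟩ := hL 1 one_pos
  refine ⟨2 * c + 1, by positivity, fun K hK => ?_⟩
  obtain ⟨C₂, hC₂, hSle⟩ := hS (1 / K) (one_div_pos.2 hK)
  refine ⟨c * C₁ + K * C₂ + 1, by positivity, fun v hv => ?_⟩
  have hTv : T v ≤ c * (Q v + L v) := (Real.le_norm_self _).trans <| by
    simpa only [Real.norm_of_nonneg (hQL v)] using isBigOWith_principal.1 hTle v hv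
  calc T v + K * S v
      ≤ c * (Q v + (1 * Q v + C₁ * M v)) + K * (1 / K * Q v + C₂ * M v) := by
        gcongr
        · exact hTv.trans (by gcongr; exact hLle v hv)
        · exact hSle v hv
    _ = (2 * c + 1) * Q v + (c * C₁ + K * C₂) * M v := by field_simp; ring
    _ ≤ (2 * c + 1) * Q v + (c * C₁ + K * C₂ + 1) * M v := by linarith [hM v]

section Quasilinear

variable {U : Set (ℝ × ℝ)} {r m s : ℕ} {h : ℝ × ℝ × ℝ → ℝ} {u a v : ℝ × ℝ → ℝ}

theorem Smooth.fieldCoeff (hh : ContDiff ℝ ∞ h) (hu : Smooth u) : Smooth (fieldCoeff h u) :=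
  hh.comp (contDiff_fst.prodMk (contDiff_snd.prodMk hu))

theorem Xvf_zero : Xvf r h u 0 = pdx := rfl

theorem Xvf_one : Xvf r h u 1 = xPowDt r := rfl

theorem Xvf_two : Xvf r h u 2 = fun v => fieldCoeff h u * xPowDt r v := by
  funext v p
  simp only [Xvf, fieldCoeff, xPowDt, Pi.mul_apply, Pi.pow_apply]
  ring

theorem Pop_eq_grushin_add (hg : Smooth (fieldCoeff h u)) (hv : Smooth v) (r : ℕ) :
    Pop r h u v = grushin r (1 + fieldCoeff h u ^ 2) v +
      fieldCoeff h u * xPowDt r (fieldCoeff h u) * xPowDt r v := by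
  have hsum : Pop r h u v = Xvf r h u 0 (Xvf r h u 0 v) + Xvf r h u 1 (Xvf r h u 1 v) +
      Xvf r h u 2 (Xvf r h u 2 v) := rfl
  rw [hsum, Xvf_zero, Xvf_one, Xvf_two]
  dsimp only
  rw [xPowDt_mul hg (hv.xPowDt r), grushin]
  ring

theorem controlled_Xvf (hU : Bornology.IsBounded U) (hg : Smooth (fieldCoeff h u)) (i : Fin 3) :
    Controlled U s (Xvf r h u i) (firstOrderNorm r s) := by
  match i with
  | 0 => exact controlled_pdx
  | 1 => exact controlled_xPowDt
  | 2 => exact Xvf_two ▸ controlled_xPowDt.mul hU hg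

theorem graphNorm_isBigO_Pop (hU : Bornology.IsBounded U) (hg : Smooth (fieldCoeff h u)) :
    graphNorm r (1 + fieldCoeff h u ^ 2) s =O[testFilter U]
      fun v => sobolevNorm s (Pop r h u v) + firstOrderNorm r s v := by
  set Q : (ℝ × ℝ → ℝ) → ℝ := fun v => sobolevNorm s (Pop r h u v) + firstOrderNorm r s v
  have hlow : firstOrderNorm r s =O[testFilter U] Q := isBigO_of_le _ fun v => by
    rw [Real.norm_of_nonneg firstOrderNorm_nonneg]
    exact (le_add_of_nonneg_left sobolevNorm_nonneg).trans (le_abs_self _)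
  have hY := controlled_xPowDt.trans hlow
  have hc : Smooth (-(fieldCoeff h u * xPowDt r (fieldCoeff h u))) := (hg.mul (hg.xPowDt r)).neg
  have hPop : Controlled U s (Pop r h u) Q := by
    refine .of_le (fun hv => ?_) fun v _ => le_add_of_nonneg_right firstOrderNorm_nonneg
    rw [Pop_eq_grushin_add hg hv.smooth]
    exact (hv.grushin (contDiff_const.add (hg.pow 2)) r).add
      ((hv.xPowDt r).mul_left (hg.mul (hg.xPowDt r)))
  have hgrushin : Controlled U s (grushin r (1 + fieldCoeff h u ^ 2)) Q :=
    (hPop.add (hY.mul hU hc)).congr fun v hv => by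
      rw [Pop_eq_grushin_add hg hv.smooth]
      ring
  exact hgrushin.isBigO.add hlow

theorem MaximalEstimate.controlled_pdx_Xvf (hU : Bornology.IsBounded U)
    (hg : Smooth (fieldCoeff h u)) (hmax : MaximalEstimate U m a s) (j : Fin 3) :
    Controlled U s (fun v => pdx (Xvf (m + 1) h u j v)) (graphNorm (m + 1) a s) := by
  have hY := controlled_xPowDt.trans
    (firstOrderNorm_isBigO_graphNorm (U := U) (n := m + 1) (s := s) (a := a))
  have hm : Smooth (m + 1 : ℝ × ℝ → ℝ) := contDiff_const (c := (m + 1 : ℝ))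
  have hxY : Controlled U s (fun v => pdx (xPowDt (m + 1) v)) (graphNorm (m + 1) a s) :=
    (hmax.xPowDt_pdx.add (hmax.xPowDt_pred.mul hU hm)).congr
      fun _ hv => pdx_xPowDt_succ hv.smooth m
  match j with
  | 0 => exact hmax.pdx_pdx
  | 1 => exact hxY
  | 2 =>
    rw [Xvf_two]
    exact ((hY.mul hU hg.pdx).add (hxY.mul hU hg)).congr
      fun _ hv => pdx_mul hg (hv.smooth.xPowDt _)

theorem MaximalEstimate.controlled_xPowDt_Xvf (hU : Bornology.IsBounded U)
    (hg : Smooth (fieldCoeff h u)) (hmax : MaximalEstimate U m a s) (j : Fin 3) :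
    Controlled U s (fun v => xPowDt (m + 1) (Xvf (m + 1) h u j v)) (graphNorm (m + 1) a s) := by
  have hY := controlled_xPowDt.trans
    (firstOrderNorm_isBigO_graphNorm (U := U) (n := m + 1) (s := s) (a := a))
  match j with
  | 0 => exact hmax.xPowDt_pdx
  | 1 => exact hmax.xPowDt_xPowDt
  | 2 =>
    rw [Xvf_two]
    exact ((hY.mul hU (hg.xPowDt _)).add (hmax.xPowDt_xPowDt.mul hU hg)).congr
      fun _ hv => xPowDt_mul hg (hv.smooth.xPowDt _) _

theorem MaximalEstimate.controlled_Xvf_Xvf (hU : Bornology.IsBounded U)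
    (hg : Smooth (fieldCoeff h u)) (hmax : MaximalEstimate U m a s) (i j : Fin 3) :
    Controlled U s (fun v => Xvf (m + 1) h u i (Xvf (m + 1) h u j v))
      (graphNorm (m + 1) a s) := by
  match i with
  | 0 => exact hmax.controlled_pdx_Xvf hU hg j
  | 1 => exact hmax.controlled_xPowDt_Xvf hU hg j
  | 2 =>
    have hXY := (hmax.controlled_xPowDt_Xvf hU hg j).mul hU hg
    exact hXY.congr fun _ _ => congrFun Xvf_two _

theorem sum_sobolevNorm_Xvf_isBigO (hU : Bornology.IsBounded U) (hg : Smooth (fieldCoeff h u)) :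
    (fun v => sobolevNorm s v + ∑ i, sobolevNorm s (Xvf r h u i v))
      =O[testFilter U] firstOrderNorm r s :=
  controlled_self.isBigO.add (.fun_sum fun i _ => (controlled_Xvf hU hg i).isBigO)

theorem MaximalEstimate.sum_sobolevNorm_Xvf_Xvf_isBigO (hU : Bornology.IsBounded U)
    (hg : Smooth (fieldCoeff h u)) (hmax : MaximalEstimate U m a s) :
    (fun v => ∑ i, ∑ j, sobolevNorm s (Xvf (m + 1) h u i (Xvf (m + 1) h u j v)))
      =O[testFilter U] graphNorm (m + 1) a s :=
  .fun_sum fun i _ => .fun_sum fun j _ => (hmax.controlled_Xvf_Xvf hU hg i j).isBigO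

theorem hasZeroRelativeBound_firstOrderNorm_Pop (hU : Bornology.IsBounded U)
    (hg : Smooth (fieldCoeff h u)) (m s : ℕ) :
    HasZeroRelativeBound U (firstOrderNorm (m + 1) s)
      (fun v => sobolevNorm s (Pop (m + 1) h u v)) (sobolevNorm 0) := by
  have ha : Smooth (1 + fieldCoeff h u ^ 2) := contDiff_const.add (hg.pow 2)
  refine HasZeroRelativeBound.absorb ?_
  exact (hasZeroRelativeBound_firstOrderNorm hU ha
    (fun p => le_add_of_nonneg_right (sq_nonneg _)) m s).mono_right
    (fun _ => add_nonneg sobolevNorm_nonneg firstOrderNorm_nonneg) (graphNorm_isBigO_Pop hU hg)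

end Quasilinear

theorem apriori_estimate_max_general
    (r : ℕ) (hr : 0 < r) (h : ℝ × ℝ × ℝ → ℝ) (hh : ContDiff ℝ (⊤ : ℕ∞) h)
    (u : ℝ × ℝ → ℝ) (hu : ContDiff ℝ (⊤ : ℕ∞) u)
    (𝒰 : Set (ℝ × ℝ)) (hb : Bornology.IsBounded 𝒰) (s : ℕ) :
    ∃ C > 0, ∀ K > (0 : ℝ), ∃ CK > 0, ∀ v : ℝ × ℝ → ℝ,
      ContDiff ℝ (⊤ : ℕ∞) v → HasCompactSupport v → tsupport v ⊆ 𝒰 →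
      (sobolevNorm s v + ∑ i : Fin 3, sobolevNorm s (Xvf r h u i v)
          + ∑ i : Fin 3, ∑ j : Fin 3, sobolevNorm s (Xvf r h u i (Xvf r h u j v)))
        + K * (sobolevNorm s v + ∑ i : Fin 3, sobolevNorm s (Xvf r h u i v)) ≤
        C * sobolevNorm s (Pop r h u v) + CK * sobolevNorm 0 v := by
  obtain ⟨m, rfl⟩ := Nat.exists_eq_add_of_lt hr
  rw [zero_add]
  have hg : Smooth (fieldCoeff h u) := .fieldCoeff hh hu
  have hmax := maximalEstimate hb (contDiff_const.add (hg.pow 2) : Smooth (1 + fieldCoeff h u ^ 2))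
    (fun p => le_add_of_nonneg_right (sq_nonneg _)) m s
  have hfirst := sum_sobolevNorm_Xvf_isBigO (r := m + 1) (s := s) hb hg
  have hsecond := hmax.sum_sobolevNorm_Xvf_Xvf_isBigO hb hg
  have hlow := hasZeroRelativeBound_firstOrderNorm_Pop hb hg m s
  obtain ⟨C, hC, hK⟩ := hlow.exists_forall_add_mul_le
    (((hfirst.trans firstOrderNorm_isBigO_graphNorm).add hsecond).trans
      (graphNorm_isBigO_Pop hb hg))
    (hlow.mono_left (fun _ => firstOrderNorm_nonneg) hfirst)
    (fun _ => add_nonneg sobolevNorm_nonneg firstOrderNorm_nonneg) fun _ => sobolevNorm_nonneg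
  refine ⟨C, hC, fun K hKpos => (hK K hKpos).imp fun CK hCK => ⟨hCK.1, fun v hv hc hs => ?_⟩⟩
  exact hCK.2 v ⟨hv, hc, hs⟩

/-- for a constant C (independent of K) and constants C_K,
Σ_{|I|≤2} ‖X^I v‖_{H²} + K Σ_{|I|≤1} ‖X^I v‖_{H²} ≤ C‖P_u v‖_{H²} + C_K ‖v‖_{L²}.
The words of length ≤ 2 in the letters {1,2,3} are the empty word, the words i,
and the words ij, giving the sums below. -/
theorem apriori_estimate_max
    (r : ℕ) (hr : 0 < r) (h : ℝ × ℝ × ℝ → ℝ) (hh : AnalyticOnNhd ℝ h Set.univ)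
    (u : ℝ × ℝ → ℝ) (hu : ContDiff ℝ (⊤ : ℕ∞) u)
    (𝒰 : Set (ℝ × ℝ)) (h𝒰 : IsOpen 𝒰) (hb : Bornology.IsBounded 𝒰) :
    ∃ C > 0, ∀ K > (0 : ℝ), ∃ CK > 0, ∀ v : ℝ × ℝ → ℝ,
      ContDiff ℝ (⊤ : ℕ∞) v → HasCompactSupport v → tsupport v ⊆ 𝒰 →
      (sobolevNorm 2 v + ∑ i : Fin 3, sobolevNorm 2 (Xvf r h u i v)
          + ∑ i : Fin 3, ∑ j : Fin 3, sobolevNorm 2 (Xvf r h u i (Xvf r h u j v)))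
        + K * (sobolevNorm 2 v + ∑ i : Fin 3, sobolevNorm 2 (Xvf r h u i v)) ≤
        C * sobolevNorm 2 (Pop r h u v) + CK * sobolevNorm 0 v :=
  apriori_estimate_max_general r hr h hh.contDiff u hu 𝒰 hb 2
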